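/- arXiv:1712.02953 — 3 statements merged into one kernel-verified Lean document; each statement's English description precedes it below -/
import Mathlib

section
/- There is an absolute constant ε₁ > 0 with the following property: let R = {z : −1/2 < Re(z), Im(z) < 1/2} (the open unit square centered at 0) and Q = closure(𝔻) ∖ R. If K ⊂ closure(𝔻) is compact and γ(𝔻 ∖ K) < ε₁, then |f(λ)| ≤ ‖f‖_{L^∞(Q∩K)} (essential supremum with respect to planar Lebesgue measure restricted to Q ∩ K) for every λ ∈ R and every f in A(𝔻), the uniform closure of the polynomials in C(closure(𝔻)). -/
/-!
The idea: where `|f|` exceeds its essential supremum `M` over `Q ∩ K`, the set `K` has no area, and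
the maximum principle makes that region large enough to give `𝔻 \ K` a definite capacity.

Suppose `|f λ| > M` with `λ ∈ R`. By the maximum principle the component of `{z ∈ 𝔻 : |f z| > M}`
containing `λ` reaches the unit circle. Hence `W = {z ∈ 𝔻 : |f z| > M, |z| > 0.71}`, an open subset
of `Q`, has a component containing points `a`, `b` with `|a - b| > 0.1` (`exists_crossing`), while
`W ∩ K` is a null set.

It remains to bound `γ(𝔻 \ K)` below by a multiple of `|a - b| ^ 2` (`le_anCap_of_null`). Joining
`a` to `b` inside `W` by a polygonal compact `J`, one has a branch of `√((z - a)(z - b))` off `J`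
and a bounded holomorphic function `G z = z - (a + b) / 2 - √((z - a)(z - b))` there, with
`z * G z → (a - b) ^ 2 / 8` at infinity (`exists_bounded_of_hasRootBranch`). Multiplying `G` by a
smooth cutoff that vanishes near `J` gives a smooth function `u`, which by the Cauchy–Pompeiu formula
(`integral_dbar_cauchy`) is the Cauchy transform of the bounded density `∂̄u / π`, supported in a
compact `T ⊆ W`. As `T ∩ K` is null, a compact `E ⊆ T \ K` has almost the full area of `T`.
Cauchy transforms of bounded densities over sets of small area are uniformly small
(`norm_integral_cauchy_le`), so restricting the density to `E` perturbs `u` and its coefficient at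
infinity arbitrarily little. The restricted transform is holomorphic off `E ⊆ 𝔻 \ K`, and after
normalization it is a competitor for `γ(𝔻 \ K)`.
-/

open MeasureTheory Metric Filter Set Complex Topology Bornology
open scoped ENNReal NNReal Real

noncomputable section

/-- Admissible-function quantity defining analytic capacity of a compact set. -/
def capAux (F : Set ℂ) : ℝ :=
  sSup {r : ℝ | ∃ f : ℂ → ℂ, DifferentiableOn ℂ f Fᶜ ∧ (∀ z ∈ Fᶜ, ‖f z‖ ≤ 1) ∧
    ∃ f0 d : ℂ, Tendsto f (cobounded ℂ) (𝓝 f0) ∧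
      Tendsto (fun z => z * (f z - f0)) (cobounded ℂ) (𝓝 d) ∧ r = ‖d‖}

/-- Analytic capacity of an arbitrary set. -/
def anCap (E : Set ℂ) : ℝ :=
  sSup {r : ℝ | ∃ F : Set ℂ, IsCompact F ∧ F ⊆ E ∧ r = capAux F}

/-- Nontangential approach region Γ_σ(z). -/
def ntRegion (σ : ℝ) (z : ℂ) : Set ℂ :=
  interior (convexHull ℝ ({z} ∪ ball (0 : ℂ) σ))

/-- Cauchy transform of the complex measure ρ dμ. -/
def cauchyT (μ : Measure ℂ) (ρ : ℂ → ℂ) (l : ℂ) : ℂ :=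
  ∫ w, (w - l)⁻¹ * ρ w ∂μ

/-- The set U(ρ dμ) of absolute convergence of the Cauchy transform. -/
def cauchyDom (μ : Measure ℂ) (ρ : ℂ → ℂ) : Set ℂ :=
  {l | Integrable (fun w => (w - l)⁻¹ * ρ w) μ}

/-- 1-dimensional radial maximal function of a (positive) measure. -/
def radialMax (m : Measure ℂ) (z : ℂ) : ℝ≥0∞ :=
  ⨆ (r : ℝ) (_ : 0 < r), m (ball z r) / ENNReal.ofReal r

/-- Normalized arclength measure `dθ/2π` on the unit circle. -/
def circleMeasure : Measure ℂ :=
  (ENNReal.ofReal (2 * Real.pi))⁻¹ •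
    (Measure.map (fun θ : ℝ => Complex.exp ((θ : ℂ) * Complex.I))
      (volume.restrict (Ico (0:ℝ) (2 * Real.pi))))

/-- Rational functions with poles off K. -/
def RatOn (K : Set ℂ) : Set (ℂ → ℂ) :=
  {f | ∃ p q : Polynomial ℂ, (∀ z ∈ K, q.eval z ≠ 0) ∧ f = fun z => p.eval z / q.eval z}

/-- The `L^t(μ)` norm, for a real exponent `t`. -/
def tnorm (t : ℝ) (μ : Measure ℂ) (f : ℂ → ℂ) : ℝ :=
  (∫ z, ‖f z‖ ^ t ∂μ) ^ (1 / t)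

/-- `C` is a bound for the evaluation functional at `l` on `Rat(K) ⊆ L^t(μ)`. -/
def EvalBound (t : ℝ) (K : Set ℂ) (μ : Measure ℂ) (l : ℂ) (C : ℝ) : Prop :=
  ∀ f ∈ RatOn K, ‖f l‖ ≤ C * tnorm t μ f

/-- The norm `M_λ` of the evaluation functional at `l` on `R^t(K,μ)`. -/
def evalNorm (t : ℝ) (K : Set ℂ) (μ : Measure ℂ) (l : ℂ) : ℝ :=
  sInf {C : ℝ | 0 ≤ C ∧ EvalBound t K μ l C}

/-- Analytic bounded point evaluations of `R^t(K,μ)`: points having a neighborhood of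
bounded point evaluations with uniformly bounded evaluation functionals (equivalently,
on which all evaluations extend analytically). -/
def abpeSet (t : ℝ) (K : Set ℂ) (μ : Measure ℂ) : Set ℂ :=
  {l | ∃ δ : ℝ, 0 < δ ∧ ∃ C : ℝ, ∀ w ∈ ball l δ, EvalBound t K μ w C}

/-- Membership in `R^t(K,μ)`, the closure of `Rat(K)` in `L^t(μ)`. -/
def RtMem (t : ℝ) (K : Set ℂ) (μ : Measure ℂ) (f : ℂ → ℂ) : Prop :=
  ∃ r : ℕ → ℂ → ℂ, (∀ n, r n ∈ RatOn K) ∧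
    Tendsto (fun n => ∫ z, ‖r n z - f z‖ ^ t ∂μ) atTop (𝓝 0)

/-- `R^t(K,μ)` is irreducible: it contains no nontrivial characteristic function. -/
def RtIrred (t : ℝ) (K : Set ℂ) (μ : Measure ℂ) : Prop :=
  ∀ E : Set ℂ, MeasurableSet E → RtMem t K μ (E.indicator 1) → μ E = 0 ∨ μ Eᶜ = 0

/-- The strong outer boundary `∂_so Ω`. -/
def strongOuter (Ω : Set ℂ) : Set ℂ :=
  {z | z ∈ frontier Ω ∧ ∃ δ : ℝ, 0 < δ ∧ δ < 1 ∧ ntRegion (1/2) z ∩ ball z δ ⊆ Ω}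

/-- The open cone with vertical axis at `l` of aperture `α`. -/
def coneAt (l : ℂ) (α : ℝ) : Set ℂ := {z | |z.re - l.re| < α * |z.im - l.im|}

def coneUp (l : ℂ) (α : ℝ) : Set ℂ := {z | z ∈ coneAt l α ∧ l.im < z.im}

def coneDown (l : ℂ) (α : ℝ) : Set ℂ := {z | z ∈ coneAt l α ∧ z.im < l.im}

def coneUpT (δ : ℝ) (l : ℂ) (α : ℝ) : Set ℂ := ball l δ ∩ coneUp l α

def coneDownT (δ : ℝ) (l : ℂ) (α : ℝ) : Set ℂ := ball l δ ∩ coneDown l α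

/-- The graph of `A : ℝ → ℝ` inside `ℂ`. -/
def lipGraph (A : ℝ → ℝ) : Set ℂ := {z | z.im = A z.re}

/-- The upper cone at `l` is outer for `K`. -/
def upperOuter (K : Set ℂ) (l : ℂ) (α : ℝ) : Prop :=
  ∃ δl εl : ℝ, 0 < δl ∧ 0 < εl ∧ ∀ δ : ℝ, 0 < δ → δ < δl →
    ∃ lδ : ℂ, ball lδ (εl * δ) ⊆ Kᶜ ∩ coneUpT δ l α

/-- The lower cone at `l` is outer for `K`. -/
def lowerOuter (K : Set ℂ) (l : ℂ) (α : ℝ) : Prop :=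
  ∃ δl εl : ℝ, 0 < δl ∧ 0 < εl ∧ ∀ δ : ℝ, 0 < δ → δ < δl →
    ∃ lδ : ℂ, ball lδ (εl * δ) ⊆ Kᶜ ∩ coneDownT δ l α

/-- The type I boundary `∂_{I,α}^{LG} K`. -/
def typeI (K : Set ℂ) (A : ℝ → ℝ) (α : ℝ) : Set ℂ :=
  {l | l ∈ lipGraph A ∧ l ∈ frontier K ∧ (upperOuter K l α ∨ lowerOuter K l α)}

def upperInner (Ω : Set ℂ) (l : ℂ) (α : ℝ) : Prop := ∃ δ : ℝ, 0 < δ ∧ coneUpT δ l α ⊆ Ω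

def lowerInner (Ω : Set ℂ) (l : ℂ) (α : ℝ) : Prop := ∃ δ : ℝ, 0 < δ ∧ coneDownT δ l α ⊆ Ω

/-- The type II boundary `∂_{II,α}^{LG} K`. -/
def typeII (K : Set ℂ) (A : ℝ → ℝ) (Ω : Set ℂ) (α : ℝ) : Set ℂ :=
  {l | l ∈ typeI K A α ∧ (upperInner Ω l α ∨ lowerInner Ω l α)}

/-- One-dimensional Hausdorff measure on `ℂ`. -/
def H1m : Measure ℂ := Measure.hausdorffMeasure 1

/-- Support of a positive measure. -/
def suppM (ν : Measure ℂ) : Set ℂ := {z | ∀ r : ℝ, 0 < r → 0 < ν (ball z r)}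

/-! ### Analytic capacity inside the unit disc -/

/-- The Cauchy estimate at `0` for `w ↦ f (1 / w)` on the unit disc. It bounds the sets whose
suprema define `capAux` and `anCap`, so that those suprema are not the junk value `0`. -/
theorem norm_coeff_infty_le_one {F : Set ℂ} (hF : F ⊆ ball (0 : ℂ) 1) {f : ℂ → ℂ}
    (hd : DifferentiableOn ℂ f Fᶜ) (hb : ∀ z ∈ Fᶜ, ‖f z‖ ≤ 1) {f0 d : ℂ}
    (h0 : Tendsto f (cobounded ℂ) (𝓝 f0))
    (h1 : Tendsto (fun z => z * (f z - f0)) (cobounded ℂ) (𝓝 d)) : ‖d‖ ≤ 1 := by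
  have hf0 : ‖f0‖ ≤ 1 := by
    refine le_of_tendsto h0.norm ?_
    have : ∀ᶠ z : ℂ in cobounded ℂ, z ∈ (closedBall (0 : ℂ) 1)ᶜ :=
      isBounded_def.1 isBounded_closedBall
    filter_upwards [this] with z hz
    exact hb z fun h => hz (ball_subset_closedBall (hF h))
  have hmem : ∀ w ∈ ball (0 : ℂ) 1, w ≠ 0 → w⁻¹ ∈ Fᶜ := by
    intro w hw hw0 h
    have h2 := hF h
    simp only [mem_ball, dist_zero_right, norm_inv] at hw h2
    have : 0 < ‖w‖ := norm_pos_iff.2 hw0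
    exact absurd h2 (not_lt.2 ((one_le_inv₀ this).2 hw.le))
  set g : ℂ → ℂ := Function.update (fun w => f w⁻¹) 0 f0 with hg
  have hgne : ∀ w ≠ 0, g w = f w⁻¹ := fun w hw => by simp [hg, hw]
  have hg0 : g 0 = f0 := by simp [hg]
  have hgd : DifferentiableOn ℂ g (ball 0 1 \ {0}) := by
    have h3 : DifferentiableOn ℂ (fun w => f w⁻¹) (ball 0 1 \ {0}) := by
      refine hd.comp (differentiableOn_inv.mono ?_) ?_
      · rintro w ⟨_, hw⟩; simpa using hw
      · rintro w ⟨hw, hw0⟩; exact hmem w hw hw0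
    refine h3.congr ?_
    rintro w ⟨_, hw⟩; exact hgne w hw
  have hder : HasDerivAt g d 0 := by
    rw [hasDerivAt_iff_tendsto_slope]
    have h4 := h1.comp (tendsto_inv₀_nhdsNE_zero (α := ℂ))
    refine h4.congr' ?_
    filter_upwards [self_mem_nhdsWithin] with w hw
    have hw : w ≠ 0 := hw
    simp [slope, hgne w hw, hg0]
  have hgD : DifferentiableOn ℂ g (ball 0 1) := by
    intro w hw
    by_cases hw0 : w = 0
    · subst hw0; exact hder.differentiableAt.differentiableWithinAt
    · refine (hgd.differentiableAt (x := w) ?_).differentiableWithinAt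
      exact (isOpen_ball.sdiff isClosed_singleton).mem_nhds ⟨hw, hw0⟩
  have hgb : ∀ w ∈ ball (0 : ℂ) 1, ‖g w‖ ≤ 1 := by
    intro w hw
    by_cases hw0 : w = 0
    · subst hw0; rw [hg0]; exact hf0
    · rw [hgne w hw0]; exact hb _ (hmem w hw hw0)
  have key : ∀ r ∈ Ioo (0 : ℝ) 1, ‖d‖ ≤ 1 / r := by
    rintro r ⟨hr0, hr1⟩
    rw [← hder.deriv]
    have hsub : closedBall (0 : ℂ) r ⊆ ball 0 1 := closedBall_subset_ball hr1
    refine norm_deriv_le_of_forall_mem_sphere_norm_le hr0 ?_ ?_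
    · exact (hgD.mono hsub).diffContOnCl_ball subset_rfl
    · intro z hz; exact hgb z (hsub (sphere_subset_closedBall hz))
  by_contra! hlt
  have hdp : 0 < ‖d‖ := by linarith
  obtain ⟨r, hr1, hr2⟩ := exists_between (inv_lt_one_of_one_lt₀ hlt)
  have hrp : 0 < r := lt_trans (by positivity) hr1
  have := key r ⟨hrp, hr2⟩
  rw [one_div] at this
  exact absurd this (not_le.2 (inv_lt_of_inv_lt₀ hdp hr1))

theorem capAux_le_one {F : Set ℂ} (hF : F ⊆ ball (0 : ℂ) 1) : capAux F ≤ 1 := by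
  refine Real.sSup_le ?_ zero_le_one
  rintro r ⟨f, hd, hb, f0, d, h0, h1, rfl⟩
  exact norm_coeff_infty_le_one hF hd hb h0 h1

theorem le_anCap {A F : Set ℂ} (hA : A ⊆ ball (0 : ℂ) 1) (hFc : IsCompact F) (hFA : F ⊆ A)
    {f : ℂ → ℂ} (hd : DifferentiableOn ℂ f Fᶜ) (hb : ∀ z ∈ Fᶜ, ‖f z‖ ≤ 1) {f0 d : ℂ}
    (h0 : Tendsto f (cobounded ℂ) (𝓝 f0))
    (h1 : Tendsto (fun z => z * (f z - f0)) (cobounded ℂ) (𝓝 d)) : ‖d‖ ≤ anCap A := by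
  have hc : ‖d‖ ≤ capAux F := by
    refine le_csSup ⟨1, ?_⟩ ⟨f, hd, hb, f0, d, h0, h1, rfl⟩
    rintro r ⟨f, hd, hb, f0, d, h0, h1, rfl⟩
    exact norm_coeff_infty_le_one (hFA.trans hA) hd hb h0 h1
  refine hc.trans (le_csSup ⟨1, ?_⟩ ⟨F, hFc, hFA, rfl⟩)
  rintro r ⟨F', _, hF', rfl⟩
  exact capAux_le_one (hF'.trans hA)

/-! ### Branches of a square root off a compact subset of `W` -/

/-- There is a compact `J ⊆ W` containing `b` such that `√((z - a) / (z - b))` has a holomorphic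
branch on the complement of `J` tending to `1` at infinity. The condition `b ∈ J` keeps the
denominator away from `0`. -/
def HasRootBranch (W : Set ℂ) (a b : ℂ) : Prop :=
  ∃ J : Set ℂ, IsCompact J ∧ J ⊆ W ∧ b ∈ J ∧ ∃ s : ℂ → ℂ, DifferentiableOn ℂ s Jᶜ ∧
    (∀ z ∉ J, s z ^ 2 = (z - a) / (z - b)) ∧ Tendsto s (cobounded ℂ) (𝓝 1)

theorem tendsto_sub_div_sub (a b : ℂ) :
    Tendsto (fun z : ℂ => (z - a) / (z - b)) (cobounded ℂ) (𝓝 1) := by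
  have h1 : Tendsto (fun z : ℂ => (z - b)⁻¹) (cobounded ℂ) (𝓝 0) :=
    tendsto_inv₀_cobounded.comp (tendsto_sub_const_cobounded b)
  have h2 : Tendsto (fun z : ℂ => 1 + (b - a) * (z - b)⁻¹) (cobounded ℂ) (𝓝 1) := by
    simpa using (h1.const_mul (b - a)).const_add 1
  refine h2.congr' ?_
  have : ∀ᶠ z : ℂ in cobounded ℂ, z ∈ ({b} : Set ℂ)ᶜ :=
    isBounded_def.1 isBounded_singleton
  filter_upwards [this] with z hz
  have : z - b ≠ 0 := sub_ne_zero.2 hz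
  field_simp
  ring

theorem div_mem_slitPlane_of_notMem_segment {a b z : ℂ} (hz : z ∉ segment ℝ a b) :
    (z - a) / (z - b) ∈ slitPlane := by
  have hzb : z - b ≠ 0 := fun h => hz (by
    rw [sub_eq_zero.1 h]; exact right_mem_segment ℝ a b)
  by_contra h
  rw [mem_slitPlane_iff_not_le_zero, not_not] at h
  obtain ⟨t, ht, hteq⟩ : ∃ t : ℝ, 0 ≤ t ∧ (z - a) / (z - b) = -(t : ℂ) := by
    refine ⟨-((z - a) / (z - b)).re, ?_, ?_⟩
    · have := (Complex.le_def.1 h).1; simpa using this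
    · have := (Complex.le_def.1 h).2
      apply Complex.ext <;> simp_all
  rw [div_eq_iff hzb] at hteq
  apply hz
  have h1 : (1 + t) ≠ 0 := by positivity
  have h1c : (1 + (t : ℂ)) ≠ 0 := by exact_mod_cast h1
  refine ⟨1 / (1 + t), t / (1 + t), by positivity, by positivity, by field_simp, ?_⟩
  simp only [real_smul]
  push_cast
  field_simp
  linear_combination -hteq

/-- Off the segment from `a` to `b` the quotient lies in the slit plane, so the principal root
works. -/
theorem hasRootBranch_segment {W : Set ℂ} {a b : ℂ} (h : segment ℝ a b ⊆ W) :
    HasRootBranch W a b := by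
  refine ⟨segment ℝ a b, ?_, h, right_mem_segment ℝ a b,
    fun z => ((z - a) / (z - b)) ^ (1 / 2 : ℂ), ?_, ?_, ?_⟩
  · rw [segment_eq_image]
    exact isCompact_Icc.image (by fun_prop)
  · intro z hz
    have hzb : z - b ≠ 0 := fun h => hz (by
      rw [sub_eq_zero.1 h]; exact right_mem_segment ℝ a b)
    refine DifferentiableAt.differentiableWithinAt ?_
    refine DifferentiableAt.cpow_const ?_ (div_mem_slitPlane_of_notMem_segment hz)
    exact (by fun_prop : DifferentiableAt ℂ (fun z => z - a) z).div (by fun_prop) hzb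
  · intro z _
    rw [← cpow_nat_mul]; norm_num
  · have hc : ContinuousAt (fun w : ℂ => w ^ (1 / 2 : ℂ)) 1 :=
      continuousAt_cpow_const (by simp)
    have := hc.tendsto.comp (tendsto_sub_div_sub a b)
    simpa [Function.comp_def] using this

theorem HasRootBranch.trans {W : Set ℂ} {a b c : ℂ} (h1 : HasRootBranch W a b)
    (h2 : HasRootBranch W b c) : HasRootBranch W a c := by
  obtain ⟨J, hJ, hJW, hbJ, s, hs, hs2, hst⟩ := h1
  obtain ⟨J', hJ', hJW', hcJ, s', hs', hs2', hst'⟩ := h2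
  refine ⟨J ∪ J', hJ.union hJ', union_subset hJW hJW', Or.inr hcJ, fun z => s z * s' z, ?_, ?_, ?_⟩
  · exact (hs.mono (by simp)).mul (hs'.mono (by simp))
  · intro z hz
    rw [mem_union, not_or] at hz
    have : z - b ≠ 0 := fun h => hz.1 (by rwa [sub_eq_zero.1 h])
    have : z - c ≠ 0 := fun h => hz.2 (by rwa [sub_eq_zero.1 h])
    rw [mul_pow, hs2 z hz.1, hs2' z hz.2]
    field_simp
  · simpa using (hst.mul hst')

/-- Inside `S` the points `a` and `b` are joined by a chain of short segments lying in `W`; the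
roots belonging to the segments multiply to the required one. -/
theorem hasRootBranch_of_isPreconnected {W S : Set ℂ} (hW : IsOpen W) (hS : IsPreconnected S)
    (hSW : S ⊆ W) {a b : ℂ} (ha : a ∈ S) (hb : b ∈ S) : HasRootBranch W a b := by
  refine hS.induction₂' (HasRootBranch W) ?_ (fun x y z _ _ _ h h' => h.trans h') ha hb
  intro x hx
  obtain ⟨r, hr, hrW⟩ := Metric.isOpen_iff.1 hW x (hSW hx)
  filter_upwards [mem_nhdsWithin_of_mem_nhds (ball_mem_nhds x hr)] with y hy
  have h1 := (convex_ball x r).segment_subset (mem_ball_self hr) hy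
  refine ⟨hasRootBranch_segment (h1.trans hrW), hasRootBranch_segment ?_⟩
  rw [segment_symm]; exact h1.trans hrW

/-- With `m = (a + b) / 2`, the function `G z = z - m - √((z - a)(z - b))` is bounded off `J`, and
`G * (z - m + √((z - a)(z - b))) = ((a - b) / 2) ^ 2` gives its expansion at infinity. In effect
this bounds the capacity of `J` below by a multiple of `|a - b| ^ 2`. -/
theorem exists_bounded_of_hasRootBranch {W : Set ℂ} (hW : W ⊆ ball 0 1) {a b : ℂ}
    (ha : a ∈ W) (hb : b ∈ W) (h : HasRootBranch W a b) :
    ∃ J : Set ℂ, IsCompact J ∧ J ⊆ W ∧ ∃ G : ℂ → ℂ, DifferentiableOn ℂ G Jᶜ ∧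
      (∀ z ∉ J, ‖G z‖ ≤ 8) ∧ Tendsto (fun z => z * G z) (cobounded ℂ) (𝓝 ((a - b) ^ 2 / 8)) := by
  obtain ⟨J, hJ, hJW, hbJ, s, hs, hs2, hst⟩ := h
  set m : ℂ := (a + b) / 2 with hm
  set δ : ℂ := (a - b) / 2 with hδ
  have ha1 : ‖a‖ ≤ 1 := by have := hW ha; simp at this; exact this.le
  have hb1 : ‖b‖ ≤ 1 := by have := hW hb; simp at this; exact this.le
  have hm1 : ‖m‖ ≤ 1 := by
    rw [hm, norm_div]; have := norm_add_le a b; simp; linarith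
  have hδ1 : ‖δ‖ ≤ 1 := by
    rw [hδ, norm_div]; have := norm_sub_le a b; simp; linarith
  have hJ1 : ∀ z : ℂ, 1 < ‖z‖ → z ∉ J := by
    intro z hz hzJ
    have := hW (hJW hzJ); simp at this; linarith
  have hh2 : ∀ z ∉ J, ((z - b) * s z) ^ 2 = (z - a) * (z - b) := by
    intro z hz
    have : z - b ≠ 0 := fun h => hz (by rwa [sub_eq_zero.1 h])
    rw [mul_pow, hs2 z hz]; field_simp
  have hfac : ∀ z ∉ J, (z - m - (z - b) * s z) * (z - m + (z - b) * s z) = δ ^ 2 := by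
    intro z hz
    have := hh2 z hz
    rw [hm, hδ]
    linear_combination -this
  -- `k` is the branch of `√(1 - (δ / (z - m)) ^ 2)` with limit `1`; for `‖z‖ ≥ 3` its real part
  -- turns out to be positive, which keeps `1 + k` away from `0`
  set k : ℂ → ℂ := fun z => (z - b) / (z - m) * s z with hk
  have hkt : Tendsto k (cobounded ℂ) (𝓝 1) := by
    simpa using (tendsto_sub_div_sub b m).mul hst
  have hzm : ∀ z : ℂ, 3 ≤ ‖z‖ → 2 ≤ ‖z - m‖ := by
    intro z hz; have := norm_sub_norm_le z m; linarith
  have hkre : ∀ z : ℂ, 3 ≤ ‖z‖ → (k z).re ≠ 0 := by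
    intro z hz h0
    have h2 := hzm z hz
    have hne : z - m ≠ 0 := norm_pos_iff.1 (by linarith)
    have h3 : k z ^ 2 = 1 - (δ / (z - m)) ^ 2 := by
      have := hh2 z (hJ1 z (by linarith))
      have e : k z = ((z - b) * s z) / (z - m) := by simp only [hk]; ring
      rw [e, div_pow, this, div_pow, eq_sub_iff_add_eq, ← add_div,
        div_eq_one_iff_eq (pow_ne_zero 2 hne), hm, hδ]
      ring
    have h4 : ‖(δ / (z - m)) ^ 2‖ ≤ 1 / 4 := by
      rw [norm_pow, norm_div]
      have : ‖δ‖ / ‖z - m‖ ≤ 1 / 2 := by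
        rw [div_le_div_iff₀ (by linarith) (by norm_num)]; linarith
      nlinarith [div_nonneg (norm_nonneg δ) (norm_nonneg (z - m))]
    have h5 := (abs_re_le_norm ((δ / (z - m)) ^ 2)).trans h4
    have h6 := congrArg re h3
    simp only [sub_re, one_re, pow_two (k z), mul_re, h0] at h6
    rw [abs_le] at h5
    nlinarith [sq_nonneg (k z).im]
  have hkpos : ∀ z : ℂ, 3 ≤ ‖z‖ → 0 < (k z).re := by
    -- the real part has no zero on the ray from `z` to infinity and tends to `1` there
    intro z hz
    have hcont : ContinuousOn (fun t : ℝ => (k (t * z)).re) (Ici 1) := by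
      intro t ht
      have ht1 : (1 : ℝ) ≤ t := ht
      have hn : 3 ≤ ‖(t : ℂ) * z‖ := by
        rw [norm_mul, norm_real, Real.norm_of_nonneg (by linarith)]; nlinarith
      have hne : (t : ℂ) * z - m ≠ 0 := norm_pos_iff.1 (by linarith [hzm _ hn])
      have hsd : ContinuousAt s (t * z) :=
        (hs.differentiableAt (hJ.isClosed.isOpen_compl.mem_nhds
          (hJ1 _ (by linarith)))).continuousAt
      have hkc : ContinuousAt k (t * z) := by
        refine ContinuousAt.mul (ContinuousAt.div ?_ ?_ hne) hsd <;> fun_prop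
      have : ContinuousAt (fun t : ℝ => k (t * z)) t :=
        ContinuousAt.comp (f := fun t : ℝ => (t : ℂ) * z) (g := k) hkc (by fun_prop)
      exact (continuous_re.continuousAt.comp this).continuousWithinAt
    by_contra! hneg
    have hzne : z ≠ 0 := norm_pos_iff.1 (by linarith)
    have hray : Tendsto (fun t : ℝ => (t : ℂ) * z) atTop (cobounded ℂ) := by
      rw [← tendsto_norm_atTop_iff_cobounded]
      have : Tendsto (fun t : ℝ => |t| * ‖z‖) atTop atTop :=
        tendsto_abs_atTop_atTop.atTop_mul_const (by linarith)
      simpa using this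
    have hlim : Tendsto (fun t : ℝ => (k (t * z)).re) atTop (𝓝 1) :=
      (continuous_re.tendsto 1).comp (hkt.comp hray)
    obtain ⟨t, ht0, ht1⟩ :=
      ((hlim.eventually (lt_mem_nhds zero_lt_one)).and (eventually_ge_atTop 1)).exists
    have hpre := (isPreconnected_Ici (a := (1 : ℝ))).image _ hcont
    have h0 : (0 : ℝ) ∈ (fun t : ℝ => (k (t * z)).re) '' Ici 1 := by
      refine hpre.ordConnected.out ⟨1, self_mem_Ici, rfl⟩ ⟨t, ht1, rfl⟩ ⟨?_, ht0.le⟩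
      simpa using hneg
    obtain ⟨u, hu, hu0⟩ := h0
    have hu1 : (1 : ℝ) ≤ u := hu
    refine hkre (u * z) ?_ hu0
    rw [norm_mul, norm_real, Real.norm_of_nonneg (by linarith)]; nlinarith
  have hG : ∀ z : ℂ, 3 ≤ ‖z‖ →
      z - m - (z - b) * s z = δ ^ 2 / ((z - m) * (1 + k z)) := by
    intro z hz
    have h2 := hzm z hz
    have hne : z - m ≠ 0 := norm_pos_iff.1 (by linarith)
    have hk1 : 1 + k z ≠ 0 := by
      intro h; have := congrArg re h; have := hkpos z hz; simp at *; linarith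
    rw [eq_div_iff (mul_ne_zero hne hk1), ← hfac z (hJ1 z (by linarith))]
    simp only [hk]
    field_simp
  refine ⟨J, hJ, hJW, fun z => z - m - (z - b) * s z, ?_, ?_, ?_⟩
  · fun_prop
  · intro z hz
    by_cases hz3 : 3 ≤ ‖z‖
    · beta_reduce
      rw [hG z hz3, norm_div, norm_pow, norm_mul]
      have h2 := hzm z hz3
      have h3 : 1 ≤ ‖1 + k z‖ := by
        refine le_trans ?_ (re_le_norm _)
        have := hkpos z hz3
        simp; linarith
      have h4 : 1 ≤ ‖z - m‖ * ‖1 + k z‖ := by nlinarith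
      rw [div_le_iff₀ (by linarith)]
      nlinarith [norm_nonneg δ]
    · push Not at hz3
      have h1 : ‖z - m‖ ≤ 4 := (norm_sub_le _ _).trans (by linarith)
      have h2 : ‖z - a‖ ≤ 4 := (norm_sub_le _ _).trans (by linarith)
      have h3 : ‖z - b‖ ≤ 4 := (norm_sub_le _ _).trans (by linarith)
      have h4 : ‖(z - b) * s z‖ ≤ 4 := by
        have := congrArg norm (hh2 z hz)
        rw [norm_pow, norm_mul (z - a)] at this
        refine le_of_sq_le_sq ?_ (by norm_num)
        rw [this]
        nlinarith [norm_nonneg (z - a), norm_nonneg (z - b)]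
      exact (norm_sub_le _ _).trans (by linarith)
  · have h1 : Tendsto (fun z : ℂ => (z - 0) / (z - m) * (δ ^ 2 / (1 + k z))) (cobounded ℂ)
        (𝓝 (1 * (δ ^ 2 / (1 + 1)))) :=
      (tendsto_sub_div_sub 0 m).mul
        (tendsto_const_nhds.div (hkt.const_add 1) (by norm_num))
    have h2 : (1 * (δ ^ 2 / (1 + 1)) : ℂ) = (a - b) ^ 2 / 8 := by rw [hδ]; ring
    rw [h2] at h1
    refine h1.congr' ?_
    have : ∀ᶠ z : ℂ in cobounded ℂ, z ∈ (closedBall (0 : ℂ) 3)ᶜ :=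
      isBounded_def.1 isBounded_closedBall
    filter_upwards [this] with z hz
    have hz3 : 3 ≤ ‖z‖ := by simp at hz; exact hz.le
    rw [hG z hz3]
    simp only [sub_zero, div_eq_mul_inv, mul_inv]
    ring

/-! ### Cauchy transforms of bounded densities -/

theorem lintegral_ball_norm_inv_le (r : ℝ) :
    ∫⁻ w in ball (0 : ℂ) r, ‖w⁻¹‖ₑ ≤ ENNReal.ofReal (2 * π * r) := by
  rw [← lintegral_indicator measurableSet_ball, ← Complex.lintegral_comp_polarCoord_symm]
  have hle : ∀ p ∈ polarCoord.target,
      ENNReal.ofReal p.1 • (ball (0 : ℂ) r).indicator (fun w => ‖w⁻¹‖ₑ)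
        (Complex.polarCoord.symm p) ≤ (Ioo 0 r ×ˢ Ioo (-π) π).indicator 1 p := by
    rintro ⟨ρ, θ⟩ ⟨hρ, hθ⟩
    have hρ : 0 < ρ := hρ
    have hn : ‖Complex.polarCoord.symm (ρ, θ)‖ = ρ := by
      rw [Complex.norm_polarCoord_symm, abs_of_pos hρ]
    by_cases hr : ρ < r
    · rw [indicator_of_mem (by rw [mem_ball_zero_iff, hn]; exact hr),
        indicator_of_mem (by exact ⟨⟨hρ, hr⟩, hθ⟩), ← ofReal_norm, norm_inv, hn, smul_eq_mul,
        ← ENNReal.ofReal_mul hρ.le, mul_inv_cancel₀ hρ.ne']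
      simp
    · rw [indicator_of_notMem (by rw [mem_ball_zero_iff, hn]; exact hr)]
      simp
  refine (setLIntegral_mono' polarCoord.open_target.measurableSet hle).trans ?_
  refine (setLIntegral_le_lintegral _ _).trans ?_
  rw [lintegral_indicator_one (measurableSet_Ioo.prod measurableSet_Ioo)]
  rw [Measure.volume_eq_prod, Measure.prod_prod, Real.volume_Ioo, Real.volume_Ioo,
    ← ENNReal.ofReal_mul' (by linarith [Real.pi_pos])]
  exact ENNReal.ofReal_le_ofReal (le_of_eq (by ring))

/-- The Cauchy kernel integrates to something small over a set of small area: points closer to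
`z` than `r` contribute at most `2πr`, the others at most `|A| / r`. -/
theorem lintegral_cauchyKernel_le (A : Set ℂ) (z : ℂ) {r : ℝ} (hr : 0 < r) :
    ∫⁻ w in A, ‖(z - w)⁻¹‖ₑ ≤ ENNReal.ofReal (2 * π * r) + ENNReal.ofReal r⁻¹ * volume A := by
  have hsub : A ⊆ ball z r ∪ (A ∩ (ball z r)ᶜ) := fun w hw => by
    by_cases h : w ∈ ball z r
    · exact Or.inl h
    · exact Or.inr ⟨hw, h⟩
  refine (lintegral_mono_set hsub).trans ((lintegral_union_le _ _ _).trans (add_le_add ?_ ?_))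
  · have h := lintegral_sub_left_eq_self (μ := (volume : Measure ℂ))
      ((ball (0 : ℂ) r).indicator (fun w => ‖w⁻¹‖ₑ)) z
    rw [lintegral_indicator measurableSet_ball] at h
    refine le_trans (le_of_eq ?_) (lintegral_ball_norm_inv_le r)
    rw [← h, ← lintegral_indicator measurableSet_ball]
    congr 1
    ext w
    have : w ∈ ball z r ↔ z - w ∈ ball (0 : ℂ) r := by
      rw [mem_ball_zero_iff, mem_ball, dist_comm, dist_eq_norm]
    by_cases hw : w ∈ ball z r
    · rw [indicator_of_mem hw, indicator_of_mem (this.1 hw)]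
    · rw [indicator_of_notMem hw, indicator_of_notMem (fun h => hw (this.2 h))]
  · have hle : ∀ w ∈ (ball z r)ᶜ, ‖(z - w)⁻¹‖ₑ ≤ ENNReal.ofReal r⁻¹ := by
      intro w hw
      rw [← ofReal_norm, norm_inv]
      refine ENNReal.ofReal_le_ofReal (inv_anti₀ hr ?_)
      rw [mem_compl_iff, mem_ball, dist_comm, dist_eq_norm] at hw
      exact not_lt.1 hw
    have h1 : ∀ᵐ w ∂(volume.restrict (A ∩ (ball z r)ᶜ)),
        ‖(z - w)⁻¹‖ₑ ≤ ENNReal.ofReal r⁻¹ := by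
      refine ae_mono (Measure.restrict_mono inter_subset_right le_rfl) ?_
      exact (ae_restrict_iff' measurableSet_ball.compl).2 (Eventually.of_forall hle)
    refine (lintegral_mono_ae h1).trans ?_
    rw [lintegral_const, Measure.restrict_apply_univ]
    gcongr
    exact inter_subset_left

theorem integrableOn_cauchy {φ : ℂ → ℂ} (hφ : Continuous φ) {C : ℝ} (hC : ∀ w, ‖φ w‖ ≤ C)
    {A : Set ℂ} (hA : volume A ≠ ∞) (z : ℂ) :
    IntegrableOn (fun w => φ w / (z - w)) A := by
  have hk : IntegrableOn (fun w => (z - w)⁻¹) A := by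
    refine ⟨(by fun_prop : Measurable fun w : ℂ => (z - w)⁻¹).aestronglyMeasurable, ?_⟩
    refine (lintegral_cauchyKernel_le A z one_pos).trans_lt ?_
    exact ENNReal.add_lt_top.2 ⟨ENNReal.ofReal_lt_top,
      ENNReal.mul_lt_top ENNReal.ofReal_lt_top hA.lt_top⟩
  simp only [div_eq_mul_inv]
  exact hk.bdd_mul hφ.aestronglyMeasurable (Eventually.of_forall hC)

theorem norm_integral_cauchy_le {φ : ℂ → ℂ} {C : ℝ} (hC : ∀ w, ‖φ w‖ ≤ C)
    (A : Set ℂ) {r : ℝ} (hr : 0 < r) (hA : volume A ≤ ENNReal.ofReal (r ^ 2)) (z : ℂ) :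
    ‖∫ w in A, φ w / (z - w)‖ ≤ C * (2 * π * r + r) := by
  have hC0 : 0 ≤ C := (norm_nonneg _).trans (hC 0)
  have h1 : ∫⁻ w in A, ‖φ w / (z - w)‖ₑ ≤ ENNReal.ofReal (C * (2 * π * r + r)) := by
    calc ∫⁻ w in A, ‖φ w / (z - w)‖ₑ
        ≤ ∫⁻ w in A, ENNReal.ofReal C * ‖(z - w)⁻¹‖ₑ := by
          refine lintegral_mono fun w => ?_
          rw [div_eq_mul_inv, enorm_mul]
          gcongr
          rw [← ofReal_norm]
          exact ENNReal.ofReal_le_ofReal (hC w)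
      _ = ENNReal.ofReal C * ∫⁻ w in A, ‖(z - w)⁻¹‖ₑ := by
          rw [lintegral_const_mul _ (by fun_prop)]
      _ ≤ ENNReal.ofReal C * (ENNReal.ofReal (2 * π * r) + ENNReal.ofReal r⁻¹ * volume A) := by
          gcongr; exact lintegral_cauchyKernel_le A z hr
      _ ≤ ENNReal.ofReal C * (ENNReal.ofReal (2 * π * r) +
            ENNReal.ofReal r⁻¹ * ENNReal.ofReal (r ^ 2)) := by gcongr
      _ = ENNReal.ofReal (C * (2 * π * r + r)) := by
          rw [← ENNReal.ofReal_mul (by positivity), ← ENNReal.ofReal_add (by positivity)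
            (by positivity), ← ENNReal.ofReal_mul hC0]
          congr 3
          field_simp
  have h2 := (enorm_integral_le_lintegral_enorm (μ := volume.restrict A)
    (fun w => φ w / (z - w))).trans h1
  rw [← ofReal_norm] at h2
  exact (ENNReal.ofReal_le_ofReal_iff (by positivity)).1 h2

theorem differentiableOn_cauchy {φ : ℂ → ℂ} (hφ : Continuous φ) {E : Set ℂ} (hE : IsCompact E) :
    DifferentiableOn ℂ (fun z => ∫ w in E, φ w / (z - w)) Eᶜ := by
  intro z₀ hz₀
  obtain ⟨ε, hε, hball⟩ := Metric.isOpen_iff.1 hE.isClosed.isOpen_compl z₀ hz₀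
  have hne : ∀ z ∈ ball z₀ (ε / 2), ∀ w ∈ E, ε / 2 ≤ ‖z - w‖ := by
    intro z hz w hw
    have h1 : ε ≤ dist w z₀ := not_lt.1 fun h => hball h hw
    have h2 : dist z z₀ < ε / 2 := hz
    have h3 := dist_triangle w z z₀
    rw [← dist_eq_norm, dist_comm]
    linarith
  have hmem : z₀ ∈ ball z₀ (ε / 2) := mem_ball_self (by linarith)
  have hcont : ∀ z ∈ ball z₀ (ε / 2), ContinuousOn (fun w => φ w / (z - w)) E := by
    intro z hz
    refine hφ.continuousOn.div (by fun_prop) fun w hw h => ?_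
    have := hne z hz w hw
    rw [h, norm_zero] at this; linarith
  have hcont' : ContinuousOn (fun w => -φ w / (z₀ - w) ^ 2) E := by
    refine hφ.neg.continuousOn.div (by fun_prop) fun w hw h => ?_
    have := hne z₀ hmem w hw
    rw [pow_eq_zero_iff two_ne_zero] at h
    rw [h, norm_zero] at this; linarith
  refine (hasDerivAt_integral_of_dominated_loc_of_deriv_le (μ := volume.restrict E)
    (F := fun z w => φ w / (z - w)) (F' := fun z w => -φ w / (z - w) ^ 2)
    (bound := fun w => ‖φ w‖ / (ε / 2) ^ 2) (ball_mem_nhds z₀ (by linarith : 0 < ε / 2))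
    ?_ ?_ ?_ ?_ ?_ ?_).2.differentiableAt.differentiableWithinAt
  · filter_upwards [ball_mem_nhds z₀ (by linarith : 0 < ε / 2)] with z hz
    exact (hcont z hz).aestronglyMeasurable hE.measurableSet
  · exact (hcont z₀ hmem).integrableOn_compact hE
  · exact hcont'.aestronglyMeasurable hE.measurableSet
  · refine (ae_restrict_iff' hE.measurableSet).2 (Eventually.of_forall fun w hw z hz => ?_)
    rw [norm_div, norm_neg, norm_pow]
    have := hne z hz w hw
    gcongr
  · exact (by fun_prop : Continuous fun w => ‖φ w‖ / (ε / 2) ^ 2).continuousOn.integrableOn_compact hE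
  · refine (ae_restrict_iff' hE.measurableSet).2 (Eventually.of_forall fun w hw z hz => ?_)
    have h1 := hne z hz w hw
    have h2 : z - w ≠ 0 := norm_pos_iff.1 (by linarith)
    have h3 := (((hasDerivAt_id z).sub_const w).inv h2).const_mul (φ w)
    have h4 := h3.congr_deriv (g' := -φ w / (z - w) ^ 2) (by simp only [id]; ring)
    simpa [div_eq_mul_inv] using h4

/-- The coefficient at infinity of a Cauchy transform is the total mass of its density. -/
theorem tendsto_mul_cauchy {φ : ℂ → ℂ} (hφ : Continuous φ) {E : Set ℂ} (hE : IsCompact E) :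
    Tendsto (fun z => z * ∫ w in E, φ w / (z - w)) (cobounded ℂ) (𝓝 (∫ w in E, φ w)) := by
  obtain ⟨R, hR0, hR⟩ := hE.isBounded.exists_pos_norm_le
  have hfar : ∀ᶠ z : ℂ in cobounded ℂ, z ∈ (closedBall (0 : ℂ) (2 * R))ᶜ :=
    isBounded_def.1 isBounded_closedBall
  have hlow : ∀ z ∈ (closedBall (0 : ℂ) (2 * R))ᶜ, ∀ w ∈ E, ‖z‖ / 2 ≤ ‖z - w‖ ∧ 0 < ‖z‖ := by
    intro z hz w hw
    simp only [mem_compl_iff, mem_closedBall, dist_zero_right, not_le] at hz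
    have := norm_sub_norm_le z w
    have := hR w hw
    constructor <;> linarith
  simp only [← integral_const_mul]
  have : (cobounded ℂ).IsCountablyGenerated := by
    rw [← comap_norm_atTop]; infer_instance
  refine tendsto_integral_filter_of_dominated_convergence (fun w => 2 * ‖φ w‖) ?_ ?_ ?_ ?_
  · filter_upwards [hfar] with z hz
    refine ContinuousOn.aestronglyMeasurable ?_ hE.measurableSet
    refine continuousOn_const.mul (hφ.continuousOn.div (by fun_prop) fun w hw h => ?_)
    have := hlow z hz w hw
    rw [h, norm_zero] at this; linarith
  · filter_upwards [hfar] with z hz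
    refine (ae_restrict_iff' hE.measurableSet).2 (Eventually.of_forall fun w hw => ?_)
    obtain ⟨h1, h2⟩ := hlow z hz w hw
    rw [norm_mul, norm_div, ← mul_div_assoc, div_le_iff₀ (by linarith)]
    nlinarith [norm_nonneg (φ w)]
  · exact (by fun_prop : Continuous fun w => 2 * ‖φ w‖).continuousOn.integrableOn_compact hE
  · refine Eventually.of_forall fun w => ?_
    have h1 : Tendsto (fun z : ℂ => (z - w)⁻¹) (cobounded ℂ) (𝓝 0) :=
      tendsto_inv₀_cobounded.comp (tendsto_sub_const_cobounded w)
    have h2 : Tendsto (fun z : ℂ => φ w * (1 + w * (z - w)⁻¹)) (cobounded ℂ) (𝓝 (φ w)) := by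
      simpa using ((h1.const_mul w).const_add 1).const_mul (φ w)
    refine h2.congr' ?_
    have : ∀ᶠ z : ℂ in cobounded ℂ, z ∈ ({w} : Set ℂ)ᶜ := isBounded_def.1 isBounded_singleton
    filter_upwards [this] with z hz
    have : z - w ≠ 0 := sub_ne_zero.2 hz
    field_simp
    ring

/-! ### The Cauchy–Pompeiu formula -/

/-- The Wirtinger derivative `∂u/∂z̄ = (∂u/∂x + i ∂u/∂y) / 2`. -/
def dbar (u : ℂ → ℂ) (w : ℂ) : ℂ := (fderiv ℝ u w 1 + I * fderiv ℝ u w I) / 2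

theorem continuous_dbar {u : ℂ → ℂ} (hu : ContDiff ℝ 1 u) : Continuous (dbar u) := by
  have := hu.continuous_fderiv one_ne_zero
  unfold dbar
  fun_prop

theorem dbar_eq_zero {u : ℂ → ℂ} {w : ℂ} (h : DifferentiableAt ℂ u w) : dbar u w = 0 := by
  have h1 : fderiv ℝ u w I = I * fderiv ℝ u w 1 := by
    rw [h.fderiv_restrictScalars ℝ]
    have := (fderiv ℂ u w).map_smul I 1
    simp
  rw [dbar, h1, ← mul_assoc, I_mul_I]
  ring

/-- `∂̄u` in the rotated frame `e^{iθ}`, `i e^{iθ}`. At `w = r e^{iθ}` this is the polar form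
`2 e^{-iθ} ∂̄u = ∂u/∂r + (i/r) ∂u/∂θ`. -/
theorem dbar_polar (u : ℂ → ℂ) (w : ℂ) (θ : ℝ) :
    dbar u w / exp (θ * I) =
      (fderiv ℝ u w (exp (θ * I)) + I * fderiv ℝ u w (I * exp (θ * I))) / 2 := by
  have h1 : exp (θ * I) = Real.cos θ • (1 : ℂ) + Real.sin θ • I := by
    rw [exp_mul_I]; simp
  have h2 : I * exp (θ * I) = (-Real.sin θ) • (1 : ℂ) + Real.cos θ • I := by
    rw [h1]; simp [mul_add]; ring_nf; simp; ring
  rw [div_eq_iff (exp_ne_zero _), h2]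
  rw [h1]
  simp only [map_add, map_smul, dbar]
  simp only [real_smul]
  have h3 : ((Real.cos θ : ℂ)) ^ 2 + (Real.sin θ : ℂ) ^ 2 = 1 := by
    exact_mod_cast Real.cos_sq_add_sin_sq θ
  push_cast at h3 ⊢
  linear_combination (-(fderiv ℝ u w 1 + I * fderiv ℝ u w I) / 2) * h3 +
    ((fderiv ℝ u w 1 * Complex.sin θ ^ 2 -
      fderiv ℝ u w I * Complex.cos θ * Complex.sin θ) / 2) * I_sq

/-- The Cauchy–Pompeiu formula at `0`. In polar coordinates the angular derivative integrates to
`0` over each circle, and the radial one integrates to boundary values along each ray. -/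
theorem integral_dbar_div {u : ℂ → ℂ} (hu : ContDiff ℝ 1 u) {R₀ : ℝ}
    (hsupp : ∀ w, R₀ < ‖w‖ → dbar u w = 0) (hlim : Tendsto u (cobounded ℂ) (𝓝 0)) :
    ∫ w, dbar u w / w = -(π * u 0) := by
  set A : ℝ → ℝ → ℂ := fun r θ => fderiv ℝ u (r * exp (θ * I)) (exp (θ * I)) with hA
  set B : ℝ → ℝ → ℂ := fun r θ => I * fderiv ℝ u (r * exp (θ * I)) (I * exp (θ * I)) with hB
  have hfd := hu.continuous_fderiv one_ne_zero
  have hAc : Continuous (Function.uncurry A) := by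
    simp only [hA, Function.uncurry_def]; fun_prop
  have hBc : Continuous (Function.uncurry B) := by
    simp only [hB, Function.uncurry_def]; fun_prop
  have hdiff : Differentiable ℝ u := hu.differentiable one_ne_zero
  -- `r * B r θ` is `I` times the derivative of `θ ↦ u (r e^{iθ})`, which is periodic
  have hBint : ∀ r : ℝ, 0 < r → ∫ θ in (-π)..π, B r θ = 0 := by
    intro r hr
    have hder : ∀ θ : ℝ, HasDerivAt (fun θ : ℝ => u (r * exp (θ * I))) (r * (-I * B r θ)) θ := by
      intro θ
      have h1 : HasDerivAt (fun θ : ℝ => (r : ℂ) * exp (θ * I)) (r • (I * exp (θ * I))) θ := by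
        have := (((hasDerivAt_id θ).ofReal_comp.mul_const I).cexp).const_mul (r : ℂ)
        exact this.congr_deriv (by simp only [id, real_smul, ofReal_one]; ring)
      have h2 := (hdiff (r * exp (θ * I))).hasFDerivAt.comp_hasDerivAt θ h1
      rw [map_smul, real_smul] at h2
      refine h2.congr_deriv ?_
      simp only [hB, ← mul_assoc, neg_mul, I_mul_I]; ring
    have h3 := intervalIntegral.integral_eq_sub_of_hasDerivAt (a := -π) (b := π)
      (fun θ _ => hder θ) (Continuous.intervalIntegrable (by
        have : Continuous (B r) := hBc.comp (by fun_prop : Continuous fun θ => (r, θ))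
        fun_prop) _ _)
    rw [intervalIntegral.integral_const_mul, intervalIntegral.integral_const_mul] at h3
    have h4 : exp (((-π : ℝ) : ℂ) * I) = exp ((π : ℂ) * I) := by
      rw [exp_eq_exp_iff_exists_int]
      exact ⟨-1, by push_cast; ring⟩
    rw [h4, sub_self] at h3
    have hr' : (r : ℂ) ≠ 0 := by exact_mod_cast hr.ne'
    simpa [hr', I_ne_zero] using h3
  have hAint : ∀ R θ : ℝ, ∫ r in (0 : ℝ)..R, A r θ = u (R * exp (θ * I)) - u 0 := by
    intro R θ
    have hder : ∀ r : ℝ, HasDerivAt (fun r : ℝ => u (r * exp (θ * I))) (A r θ) r := by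
      intro r
      have h1 : HasDerivAt (fun r : ℝ => (r : ℂ) * exp (θ * I)) (exp (θ * I)) r := by
        simpa using (hasDerivAt_id r).ofReal_comp.mul_const (exp (θ * I))
      exact (hdiff (r * exp (θ * I))).hasFDerivAt.comp_hasDerivAt r h1
    have := intervalIntegral.integral_eq_sub_of_hasDerivAt (a := 0) (b := R)
      (fun r _ => hder r) (Continuous.intervalIntegrable
        (hAc.comp (by fun_prop : Continuous fun r => (r, θ))) _ _)
    simpa using this
  have hcircle : Continuous fun p : ℝ × ℝ => u (p.1 * exp (p.2 * I)) := by
    have := hu.continuous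
    fun_prop
  have key : ∀ R : ℝ, R₀ ≤ R → 0 < R →
      ∫ w, dbar u w / w = (∫ θ in (-π)..π, u (R * exp (θ * I))) / 2 - π * u 0 := by
    intro R hR hRpos
    set H : ℝ × ℝ → ℂ := fun p => (A p.1 p.2 + B p.1 p.2) / 2 with hH
    have hHc : Continuous H := (hAc.add hBc).div_const 2
    have hHeq : ∀ p : ℝ × ℝ, H p = dbar u (p.1 * exp (p.2 * I)) / exp (p.2 * I) :=
      fun p => (dbar_polar u _ _).symm
    rw [← Complex.integral_comp_polarCoord_symm]
    have e1 : ∫ p in polarCoord.target, p.1 • (dbar u (Complex.polarCoord.symm p) /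
        Complex.polarCoord.symm p) = ∫ p in polarCoord.target, H p := by
      refine setIntegral_congr_fun polarCoord.open_target.measurableSet ?_
      rintro ⟨r, θ⟩ ⟨hr, _⟩
      have hr : (r : ℂ) ≠ 0 := by exact_mod_cast (show (0 : ℝ) < r from hr).ne'
      have h1 : Complex.polarCoord.symm (r, θ) = r * exp (θ * I) := by
        rw [Complex.polarCoord_symm_apply, exp_mul_I]; simp
      have := exp_ne_zero (θ * I)
      simp only [hHeq, h1, real_smul]
      field_simp
    have e2 : ∫ p in polarCoord.target, H p = ∫ p in Ioc 0 R ×ˢ Ioo (-π) π, H p := by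
      refine setIntegral_eq_of_subset_of_forall_sdiff_eq_zero
        polarCoord.open_target.measurableSet ?_ ?_
      · rintro ⟨r, θ⟩ ⟨hr, hθ⟩; exact ⟨hr.1, hθ⟩
      · rintro ⟨r, θ⟩ ⟨⟨hr, hθ⟩, hn⟩
        have hr : 0 < r := hr
        have hrR : R < r := by
          by_contra! h; exact hn ⟨⟨hr, h⟩, hθ⟩
        rw [hHeq, hsupp, zero_div]
        rw [norm_mul, norm_exp_ofReal_mul_I, norm_real, Real.norm_of_nonneg hr.le]
        linarith
    have hπ : -π ≤ π := by linarith [Real.pi_pos]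
    have e3 : ∫ p in Ioc 0 R ×ˢ Ioo (-π) π, H p =
        ∫ r in (0 : ℝ)..R, ∫ θ in (-π)..π, H (r, θ) := by
      rw [Measure.volume_eq_prod, setIntegral_prod, intervalIntegral.integral_of_le hRpos.le]
      · simp only [intervalIntegral.integral_of_le hπ, integral_Ioc_eq_integral_Ioo]
      · rw [← Measure.volume_eq_prod]
        exact (hHc.continuousOn.integrableOn_compact
          (isCompact_Icc.prod isCompact_Icc)).mono_set
          (prod_mono Ioc_subset_Icc_self Ioo_subset_Icc_self)
    have e4 : ∫ r in (0 : ℝ)..R, ∫ θ in (-π)..π, H (r, θ) =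
        ∫ r in (0 : ℝ)..R, (∫ θ in (-π)..π, A r θ) / 2 := by
      refine intervalIntegral.integral_congr_ae (Eventually.of_forall fun r hr => ?_)
      rw [uIoc_of_le hRpos.le] at hr
      have hc1 : Continuous (A r) := hAc.comp (by fun_prop : Continuous fun θ => (r, θ))
      have hc2 : Continuous (B r) := hBc.comp (by fun_prop : Continuous fun θ => (r, θ))
      simp only [hH]
      rw [intervalIntegral.integral_div, intervalIntegral.integral_add
        (hc1.intervalIntegrable _ _) (hc2.intervalIntegrable _ _), hBint r hr.1, add_zero]
    have e5 : ∫ r in (0 : ℝ)..R, ∫ θ in (-π)..π, A r θ =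
        ∫ θ in (-π)..π, ∫ r in (0 : ℝ)..R, A r θ := by
      refine intervalIntegral_intervalIntegral_swap ?_
      exact (hAc.continuousOn.integrableOn_compact
        (isCompact_uIcc.prod isCompact_uIcc)).mono_set
        (prod_mono uIoc_subset_uIcc uIoc_subset_uIcc)
    rw [e1, e2, e3, e4, intervalIntegral.integral_div, e5]
    simp only [hAint]
    rw [intervalIntegral.integral_sub, intervalIntegral.integral_const]
    · rw [real_smul]; push_cast; ring
    · exact (hcircle.comp (by fun_prop : Continuous fun θ : ℝ => (R, θ))).intervalIntegrable _ _
    · exact intervalIntegrable_const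
  have hzero : ∀ ε > 0, ‖(∫ w, dbar u w / w) + π * u 0‖ ≤ ε := by
    intro ε hε
    have hev : ∀ᶠ z in cobounded ℂ, ‖u z‖ ≤ ε / π := by
      have := hlim.eventually (closedBall_mem_nhds 0 (div_pos hε Real.pi_pos))
      simpa using this
    obtain ⟨R₁, hR₁⟩ := (hasBasis_cobounded_norm.eventually_iff).1 hev
    set R := max (max R₀ R₁) 1
    have hRpos : 0 < R := lt_of_lt_of_le one_pos (le_max_right _ _)
    rw [key R ((le_max_left _ _).trans (le_max_left _ _)) hRpos, sub_add_cancel, norm_div]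
    have := intervalIntegral.norm_integral_le_of_norm_le_const (a := -π) (b := π)
      (f := fun θ : ℝ => u (R * exp (θ * I))) (C := ε / π) (fun θ _ => by
        refine hR₁.2 ?_
        rw [mem_ofPred_eq, norm_mul, norm_exp_ofReal_mul_I, norm_real,
          Real.norm_of_nonneg hRpos.le, mul_one]
        exact (le_max_right _ _).trans (le_max_left _ _))
    have hab : |π - -π| = 2 * π := by
      rw [abs_of_pos (by linarith [Real.pi_pos])]; ring
    rw [hab] at this
    have hp := Real.pi_pos
    have h2 : ε / π * (2 * π) = 2 * ε := by field_simp
    rw [h2] at this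
    simp; linarith
  have : (∫ w, dbar u w / w) + π * u 0 = 0 := by
    rw [← norm_le_zero_iff]
    exact le_of_forall_pos_le_add fun ε hε => by simpa using hzero ε hε
  linear_combination this

/-- The Cauchy–Pompeiu formula for a function vanishing at infinity and holomorphic near
infinity. -/
theorem integral_dbar_cauchy {u : ℂ → ℂ} (hu : ContDiff ℝ 1 u) {R₀ : ℝ}
    (hsupp : ∀ w, R₀ < ‖w‖ → dbar u w = 0) (hlim : Tendsto u (cobounded ℂ) (𝓝 0)) (z : ℂ) :
    ∫ w, dbar u w / (z - w) = π * u z := by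
  have hd : ∀ w, dbar (fun x => u (x + z)) w = dbar u (w + z) := by
    intro w; simp only [dbar, fderiv_comp_add_right]
  have h1 := integral_dbar_div (u := fun x => u (x + z)) (R₀ := R₀ + ‖z‖)
    (hu.comp (contDiff_id.add contDiff_const)) (fun w hw => by
      rw [hd]
      refine hsupp _ ?_
      have := norm_sub_norm_le w (-z)
      rw [sub_neg_eq_add, norm_neg] at this
      linarith)
    (hlim.comp (tendsto_add_const_cobounded z))
  simp only [hd, zero_add] at h1
  have h2 := integral_add_right_eq_self (μ := (volume : Measure ℂ))
    (fun w => dbar u w / (w - z)) z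
  simp only [add_sub_cancel_right] at h2
  rw [h2] at h1
  have h3 : ∀ w, dbar u w / (z - w) = -(dbar u w / (w - z)) := fun w => by
    rw [← neg_sub w z, div_neg]
  simp only [h3]
  rw [integral_neg, h1, neg_neg]

/-! ### Lower bound for the capacity of a set of full area -/

/-- If the open set `W` meets `K` in a null set, then `ball 0 1 \ K` has capacity bounded below in
terms of the diameter of any connected subset of `W`. Cut off `G` near `J`, write the result as
the Cauchy transform of its `∂̄`-derivative, and restrict that density to a compact `E ⊆ W \ K`
of almost full area: the transform and its coefficient at infinity hardly change. -/
theorem le_anCap_of_null {W S K : Set ℂ} (hW : IsOpen W) (hWb : W ⊆ ball 0 1)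
    (hK : IsClosed K) (hnull : volume (W ∩ K) = 0) (hS : IsPreconnected S) (hSW : S ⊆ W)
    {a b : ℂ} (ha : a ∈ S) (hb : b ∈ S) (hab : a ≠ b) :
    ‖a - b‖ ^ 2 / 80 ≤ anCap (ball 0 1 \ K) := by
  obtain ⟨J, hJ, hJW, G, hGd, hGb, hGt⟩ := exists_bounded_of_hasRootBranch hWb (hSW ha) (hSW hb)
    (hasRootBranch_of_isPreconnected hW hS hSW ha hb)
  obtain ⟨T, hT, hJT, hTW⟩ := exists_compact_between hJ hW hJW
  have hJT' : J ⊆ T := hJT.trans interior_subset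
  obtain ⟨ψ, hψ1, hψ0, hψ⟩ := exists_contMDiffMap_one_nhds_of_subset_interior (n := 1)
    (modelWithCornersSelf ℝ ℂ) hJ.isClosed hJT
  have hψc : ContDiff ℝ 1 ψ := ψ.contMDiff.contDiff
  set u : ℂ → ℂ := fun z => ((1 - ψ z : ℝ) : ℂ) * G z with hu
  have huc : ContDiff ℝ 1 u := by
    rw [contDiff_iff_contDiffAt]
    intro z
    by_cases hz : z ∈ J
    · have h1 : u =ᶠ[𝓝 z] fun _ => 0 := by
        filter_upwards [mem_nhdsSet_iff_forall.1 hψ1 z hz] with w hw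
        have hw : ψ w = 1 := hw
        simp [hu, hw]
      exact contDiffAt_const.congr_of_eventuallyEq h1
    · have h1 : ContDiffAt ℝ 1 G z :=
        ((hGd.analyticAt (hJ.isClosed.isOpen_compl.mem_nhds hz)).contDiffAt
          (n := 1)).restrict_scalars ℝ
      have h2 : ContDiff ℝ 1 (fun z => ((1 - ψ z : ℝ) : ℂ)) :=
        ofRealCLM.contDiff.comp (contDiff_const.sub hψc)
      exact h2.contDiffAt.mul h1
  have hub : ∀ z, ‖u z‖ ≤ 8 := by
    intro z
    by_cases hz : z ∈ J
    · simp [hu, hψ1.self_of_nhdsSet z hz]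
    · have h1 := hψ z
      rw [hu, norm_mul, norm_real, Real.norm_of_nonneg (by linarith [h1.2])]
      have := hGb z hz
      nlinarith [norm_nonneg (G z), h1.1]
  have huG : ∀ z ∉ T, u z = G z := fun z hz => by simp [hu, hψ0 z hz]
  set φ := dbar u with hφ
  have hφc : Continuous φ := continuous_dbar huc
  have hφ0 : ∀ w ∉ T, φ w = 0 := by
    intro w hw
    refine dbar_eq_zero ?_
    have h1 : u =ᶠ[𝓝 w] G := by
      filter_upwards [hT.isClosed.isOpen_compl.mem_nhds hw] with z hz using huG z hz
    exact (hGd.differentiableAt (hJ.isClosed.isOpen_compl.mem_nhds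
      fun h => hw (hJT' h))).congr_of_eventuallyEq h1
  obtain ⟨C, hC0, hC⟩ : ∃ C : ℝ, 0 < C ∧ ∀ w, ‖φ w‖ ≤ C := by
    obtain ⟨C, hC⟩ := hT.exists_bound_of_continuousOn hφc.continuousOn
    refine ⟨max C 1, by positivity, fun w => ?_⟩
    by_cases hw : w ∈ T
    · exact (hC w hw).trans (le_max_left _ _)
    · rw [hφ0 w hw, norm_zero]; positivity
  have hfar : ∀ᶠ z : ℂ in cobounded ℂ, z ∈ (closedBall (0 : ℂ) 1)ᶜ :=
    isBounded_def.1 isBounded_closedBall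
  have hTball : ∀ z ∈ (closedBall (0 : ℂ) 1)ᶜ, z ∉ T :=
    fun z hz h => hz (ball_subset_closedBall (hWb (hTW h)))
  have hne0 : ∀ z ∈ (closedBall (0 : ℂ) 1)ᶜ, z ≠ 0 := by
    rintro z hz rfl; simp at hz
  have hut : Tendsto (fun z => z * u z) (cobounded ℂ) (𝓝 ((a - b) ^ 2 / 8)) := by
    refine hGt.congr' ?_
    filter_upwards [hfar] with z hz
    rw [huG z (hTball z hz)]
  have hu0 : Tendsto u (cobounded ℂ) (𝓝 0) := by
    have h1 := (tendsto_inv₀_cobounded (α := ℂ)).mul hut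
    rw [zero_mul] at h1
    refine h1.congr' ?_
    filter_upwards [hfar] with z hz
    rw [inv_mul_cancel_left₀ (hne0 z hz)]
  have hrep : ∀ z, ∫ w in T, φ w / (z - w) = π * u z := by
    intro z
    rw [← integral_dbar_cauchy huc (R₀ := 1) (fun w hw => hφ0 w (hTball w (by simpa using hw)))
      hu0 z]
    refine setIntegral_eq_integral_of_forall_compl_eq_zero fun w hw => ?_
    rw [hφ0 w hw, zero_div]
  have hmass : ∫ w in T, φ w = π * ((a - b) ^ 2 / 8) := by
    refine tendsto_nhds_unique (tendsto_mul_cauchy hφc hT) ?_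
    refine (hut.const_mul (π : ℂ)).congr fun z => ?_
    rw [hrep]; ring
  set x := ‖a - b‖ ^ 2 with hx
  have hx0 : 0 < x := by
    have := norm_pos_iff.2 (sub_ne_zero.2 hab); positivity
  -- `η` is the admissible error; leaving out area `r ^ 2` costs at most `8 * C * r ≤ η`, both in
  -- the Cauchy transform and in the total mass
  set η := min 1 (x / 80) with hη
  have hη0 : 0 < η := lt_min one_pos (by positivity)
  set r := min 1 (η / (8 * C)) with hr
  have hr0 : 0 < r := lt_min one_pos (by positivity)
  have hr1 : r ≤ 1 := min_le_left _ _
  have hCr : 8 * C * r ≤ η := by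
    have : r ≤ η / (8 * C) := min_le_right _ _
    rwa [le_div_iff₀ (by positivity), mul_comm] at this
  have hTK : volume (T \ K) ≠ ∞ :=
    ((measure_mono sdiff_subset).trans_lt hT.measure_lt_top).ne
  obtain ⟨E, hET, hE, hEv⟩ := (hT.measurableSet.diff hK.measurableSet).exists_isCompact_sdiff_lt
    hTK (ε := ENNReal.ofReal (r ^ 2)) (by simpa using hr0.ne')
  have hrest : volume (T \ E) ≤ ENNReal.ofReal (r ^ 2) := by
    have hsub : T \ E ⊆ ((T \ K) \ E) ∪ (W ∩ K) := by
      rintro w ⟨hw, hwE⟩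
      by_cases hwK : w ∈ K
      · exact Or.inr ⟨hTW hw, hwK⟩
      · exact Or.inl ⟨⟨hw, hwK⟩, hwE⟩
    refine (measure_mono hsub).trans ((measure_union_le _ _).trans ?_)
    rw [hnull, add_zero]; exact hEv.le
  have hET' : E ⊆ T := hET.trans sdiff_subset
  have hsplit : ∀ z, ∫ w in E, φ w / (z - w) = π * u z - ∫ w in T \ E, φ w / (z - w) := by
    intro z
    rw [setIntegral_sdiff hE.measurableSet
      (integrableOn_cauchy hφc hC hT.measure_lt_top.ne z) hET', hrep]
    ring
  have hpi := Real.pi_pos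
  have hpi3 := Real.pi_gt_three
  have hpi4 := Real.pi_lt_d2
  have hbound : ∀ z, ‖∫ w in E, φ w / (z - w)‖ ≤ 9 * π := by
    intro z
    rw [hsplit]
    refine (norm_sub_le _ _).trans ?_
    have h1 := norm_integral_cauchy_le hC (T \ E) hr0 hrest z
    have h2 : C * (2 * π * r + r) ≤ 8 * C * r := by
      have : 0 < C * r := by positivity
      nlinarith
    have h3 : η ≤ 1 := min_le_left _ _
    have h4 : ‖(π : ℂ) * u z‖ ≤ π * 8 := by
      rw [norm_mul, norm_real, Real.norm_of_nonneg hpi.le]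
      gcongr; exact hub z
    linarith
  have hmassE : π * (x / 8) - η ≤ ‖∫ w in E, φ w‖ := by
    have hφint : IntegrableOn φ T := hφc.continuousOn.integrableOn_compact hT
    have h1 : ∫ w in T, φ w = (∫ w in E, φ w) + ∫ w in T \ E, φ w := by
      rw [setIntegral_sdiff hE.measurableSet hφint hET']; ring
    have hfin : volume (T \ E) < ∞ := hrest.trans_lt ENNReal.ofReal_lt_top
    have h2 : ‖∫ w in T \ E, φ w‖ ≤ C * volume.real (T \ E) :=
      norm_setIntegral_le_of_norm_le_const hfin fun w _ => hC w
    have h3 : volume.real (T \ E) ≤ r ^ 2 := ENNReal.toReal_le_of_le_ofReal (by positivity) hrest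
    have h4 : C * r ^ 2 ≤ 8 * C * r := by nlinarith [mul_pos hC0 hr0]
    have h5 : C * volume.real (T \ E) ≤ C * r ^ 2 := by gcongr
    have h6 : ‖∫ w in T, φ w‖ = π * (x / 8) := by
      rw [hmass, norm_mul, norm_real, Real.norm_of_nonneg hpi.le, norm_div, norm_pow, hx]
      norm_num
    have h7 := norm_add_le (∫ w in E, φ w) (∫ w in T \ E, φ w)
    rw [← h1, h6] at h7
    linarith
  set c : ℂ := ((9 * π : ℝ) : ℂ)⁻¹ with hc
  have hcn : ‖c‖ = (9 * π)⁻¹ := by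
    rw [hc, norm_inv, norm_real, Real.norm_of_nonneg (by positivity)]
  have hlim := (tendsto_mul_cauchy hφc hE).const_mul c
  have hlim' : Tendsto (fun z => z * (c * ∫ w in E, φ w / (z - w))) (cobounded ℂ)
      (𝓝 (c * ∫ w in E, φ w)) := hlim.congr fun z => by ring
  have hzero : Tendsto (fun z => c * ∫ w in E, φ w / (z - w)) (cobounded ℂ) (𝓝 0) := by
    have h1 := (tendsto_inv₀_cobounded (α := ℂ)).mul hlim'
    rw [zero_mul] at h1
    refine h1.congr' ?_
    filter_upwards [hfar] with z hz
    rw [inv_mul_cancel_left₀ (hne0 z hz)]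
  have hfinal := le_anCap (A := ball 0 1 \ K) sdiff_subset hE
    (fun w hw => ⟨hWb (hTW (hET' hw)), (hET hw).2⟩)
    (f := fun z => c * ∫ w in E, φ w / (z - w)) ((differentiableOn_cauchy hφc hE).const_mul c)
    (fun z _ => by
      rw [norm_mul, hcn, inv_mul_le_iff₀ (by positivity), mul_one]; exact hbound z)
    hzero (by simpa using hlim')
  refine le_trans ?_ hfinal
  rw [norm_mul, hcn, le_inv_mul_iff₀ (by positivity)]
  have h8 : η ≤ x / 80 := min_le_right _ _
  nlinarith

/-! ### A large component of `{|f| > M}` in the annulus -/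

theorem mem_connectedComponentIn_of_mem_closure {F : Set ℂ} (hF : IsOpen F) {x z : ℂ}
    (hz : z ∈ F) (hc : z ∈ closure (connectedComponentIn F x)) :
    z ∈ connectedComponentIn F x := by
  obtain ⟨y, hy1, hy2⟩ := mem_closure_iff.1 hc _ hF.connectedComponentIn
    (mem_connectedComponentIn hz)
  rw [connectedComponentIn_eq hy2, ← connectedComponentIn_eq hy1]
  exact mem_connectedComponentIn hz

/-- If `|f| > M` at a point of modulus below `0.71`, then in the annulus `0.71 < |z| < 1` the set
`{|f| > M}` has a component of diameter greater than `0.1`. -/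
theorem exists_crossing {f : ℂ → ℂ} (hfc : ContinuousOn f (closedBall 0 1))
    (hfd : DifferentiableOn ℂ f (ball 0 1)) {M : ℝ} {l : ℂ} (hl : ‖l‖ < 0.71)
    (hM : M < ‖f l‖) {W : Set ℂ}
    (hWdef : W = {z | z ∈ ball (0 : ℂ) 1 ∧ M < ‖f z‖ ∧ 0.71 < ‖z‖}) :
    IsOpen W ∧ ∃ S ⊆ W, IsPreconnected S ∧ ∃ a ∈ S, ∃ b ∈ S, 0.1 < ‖a - b‖ := by
  set U : Set ℂ := ball 0 1 ∩ (fun z => ‖f z‖) ⁻¹' Ioi M with hU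
  have hUo : IsOpen U :=
    (hfc.mono ball_subset_closedBall).norm.isOpen_inter_preimage isOpen_ball isOpen_Ioi
  have hWU : W = U ∩ {z | 0.71 < ‖z‖} := by
    subst hWdef
    ext z
    exact ⟨fun h => ⟨⟨h.1, h.2.1⟩, h.2.2⟩, fun h => ⟨h.1.1, h.1.2, h.2⟩⟩
  have hWo : IsOpen W := by
    rw [hWU]; exact hUo.inter (isOpen_lt continuous_const continuous_norm)
  refine ⟨hWo, ?_⟩
  have hlU : l ∈ U := ⟨by rw [mem_ball_zero_iff]; linarith, hM⟩
  set V := connectedComponentIn U l with hV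
  have hVo : IsOpen V := hUo.connectedComponentIn
  have hVU : V ⊆ U := connectedComponentIn_subset U l
  have hVb : V ⊆ ball 0 1 := hVU.trans inter_subset_left
  have hlV : l ∈ V := mem_connectedComponentIn hlU
  have hclV : closure V ⊆ closedBall 0 1 := by
    rw [← closure_ball (0 : ℂ) one_ne_zero]; exact closure_mono hVb
  -- the maximum principle forces the component `V` of `{|f| > M}` to reach the unit circle
  obtain ⟨ζ, hζ, hζ1⟩ : ∃ ζ ∈ closure V, ‖ζ‖ = 1 := by
    by_contra! hno
    refine absurd ?_ (not_le.2 hM)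
    refine norm_le_of_forall_mem_frontier_norm_le (isBounded_ball.subset hVb)
      ⟨hfd.mono hVb, hfc.mono hclV⟩ (fun z hz => ?_) (subset_closure hlV)
    by_contra! hzM
    have hzc : z ∈ closure V := frontier_subset_closure hz
    have hz1 : ‖z‖ < 1 := lt_of_le_of_ne (mem_closedBall_zero_iff.1 (hclV hzc)) (hno z hzc)
    have hzV : z ∈ V := mem_connectedComponentIn_of_mem_closure hUo
      ⟨mem_ball_zero_iff.2 hz1, hzM⟩ hzc
    rw [hVo.frontier_eq] at hz
    exact hz.2 hzV
  obtain ⟨b, hbV, hbζ⟩ := Metric.mem_closure_iff.1 hζ 0.01 (by norm_num)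
  have hb : 0.99 < ‖b‖ := by
    have := norm_sub_norm_le ζ b
    rw [dist_eq_norm] at hbζ
    linarith
  have hbW : b ∈ W := by
    rw [hWU]; exact ⟨hVU hbV, show 0.71 < ‖b‖ by linarith⟩
  set S := connectedComponentIn W b with hS
  have hbS : b ∈ S := mem_connectedComponentIn hbW
  refine ⟨S, connectedComponentIn_subset W b, isPreconnected_connectedComponentIn, ?_⟩
  -- otherwise `S` would be open and relatively closed in the connected set `V`, which contains `l`
  obtain ⟨a, haS, ha⟩ : ∃ a ∈ S, ‖a‖ < 0.8 := by
    by_contra! hno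
    have hcl : closure S ⊆ {z | 0.8 ≤ ‖z‖} :=
      closure_minimal hno (isClosed_le continuous_const continuous_norm)
    obtain ⟨z, -, hz1, hz2⟩ := (isPreconnected_connectedComponentIn (F := U) (x := l)) S
      (closure S)ᶜ hWo.connectedComponentIn isClosed_closure.isOpen_compl (fun z hz => by
        by_cases hzc : z ∈ closure S
        · left
          refine mem_connectedComponentIn_of_mem_closure hWo ?_ hzc
          have h1 : 0.8 ≤ ‖z‖ := hcl hzc
          rw [hWU]
          exact ⟨hVU hz, show 0.71 < ‖z‖ by linarith⟩
        · exact Or.inr hzc)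
      ⟨b, hbV, hbS⟩ ⟨l, hlV, fun h => by
        have h1 : 0.8 ≤ ‖l‖ := hcl h
        linarith⟩
    exact hz2 (subset_closure hz1)
  refine ⟨a, haS, b, hbS, ?_⟩
  have := norm_sub_norm_le b a
  rw [norm_sub_rev] at this
  linarith

/-! ### Conclusion -/

/-- Lemma 4 (lemmaDSet): there is an absolute constant `ε₁ > 0` so that if
`γ(𝔻 ∖ K) < ε₁` then every function in `A(𝔻)` (uniform limits of polynomials on
the closed disc) satisfies `|f(λ)| ≤ ‖f‖_{L^∞(Q ∩ K)}` on the unit square `R`,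
where `Q = 𝔻̄ ∖ R`. -/
theorem stmt2 :
    ∃ ε₁ : ℝ, 0 < ε₁ ∧
    ∀ K : Set ℂ, IsCompact K → K ⊆ closedBall (0:ℂ) 1 →
      anCap (ball (0:ℂ) 1 \ K) < ε₁ →
      ∀ f : ℂ → ℂ,
        (∃ P : ℕ → Polynomial ℂ,
          TendstoUniformlyOn (fun n z => (P n).eval z) f atTop (closedBall (0:ℂ) 1)) →
        ∀ l ∈ {z : ℂ | -(1/2) < z.re ∧ z.re < 1/2 ∧ -(1/2) < z.im ∧ z.im < 1/2},
          ENNReal.ofReal ‖f l‖ ≤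
            eLpNorm f ⊤ (volume.restrict
              ((closedBall (0:ℂ) 1 \
                {z : ℂ | -(1/2) < z.re ∧ z.re < 1/2 ∧ -(1/2) < z.im ∧ z.im < 1/2}) ∩ K)) := by
  refine ⟨1 / 10000, by norm_num, ?_⟩
  intro K hK _ hcap f ⟨P, hP⟩ l hl
  set R : Set ℂ := {z : ℂ | -(1/2) < z.re ∧ z.re < 1/2 ∧ -(1/2) < z.im ∧ z.im < 1/2} with hR
  -- `R` has half-diagonal `√2 / 2 < 0.71`
  have hRnorm : ∀ z ∈ R, ‖z‖ < 0.71 := by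
    rintro z ⟨h1, h2, h3, h4⟩
    have h5 : ‖z‖ ^ 2 = z.re ^ 2 + z.im ^ 2 := by
      rw [← normSq_eq_norm_sq, normSq_apply]; ring
    nlinarith [norm_nonneg z]
  have hRo : IsOpen R := by
    have e : R = {z : ℂ | -(1/2) < z.re} ∩ ({z : ℂ | z.re < 1/2} ∩
        ({z : ℂ | -(1/2) < z.im} ∩ {z : ℂ | z.im < 1/2})) := rfl
    rw [e]
    exact (isOpen_lt continuous_const continuous_re).inter
      ((isOpen_lt continuous_re continuous_const).inter
      ((isOpen_lt continuous_const continuous_im).inter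
      (isOpen_lt continuous_im continuous_const)))
  have hfc : ContinuousOn f (closedBall 0 1) :=
    hP.continuousOn (Eventually.of_forall fun n => (P n).continuous.continuousOn).frequently
  have hfd : DifferentiableOn ℂ f (ball 0 1) :=
    (hP.mono ball_subset_closedBall).tendstoLocallyUniformlyOn.differentiableOn
      (Eventually.of_forall fun n => (P n).differentiable.differentiableOn) isOpen_ball
  by_contra! hlt
  set N := eLpNorm f ⊤ (volume.restrict ((closedBall (0:ℂ) 1 \ R) ∩ K)) with hN
  have hNtop : N ≠ ∞ := (hlt.trans ENNReal.ofReal_lt_top).ne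
  have hM : N.toReal < ‖f l‖ := (ENNReal.lt_ofReal_iff_toReal_lt hNtop).1 hlt
  obtain ⟨hWo, S, hSW, hS, a, ha, b, hb, hab⟩ := exists_crossing hfc hfd (hRnorm l hl) hM rfl
  set W := {z | z ∈ ball (0 : ℂ) 1 ∧ N.toReal < ‖f z‖ ∧ 0.71 < ‖z‖} with hW
  have hnull : volume (W ∩ K) = 0 := by
    have h1 : ∀ᵐ z ∂(volume.restrict ((closedBall (0:ℂ) 1 \ R) ∩ K)), ‖f z‖ₑ ≤ N := by
      rw [hN, eLpNorm_exponent_top]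
      exact ae_le_eLpNormEssSup
    rw [ae_restrict_iff' ((measurableSet_closedBall.diff hRo.measurableSet).inter
      hK.measurableSet), ae_iff] at h1
    refine measure_mono_null ?_ h1
    rintro z ⟨⟨hz1, hz2, hz3⟩, hzK⟩ hcon
    have h2 := hcon ⟨⟨ball_subset_closedBall hz1, fun h => by linarith [hRnorm z h]⟩, hzK⟩
    rw [← ofReal_norm, ← ENNReal.ofReal_toReal hNtop,
      ENNReal.ofReal_le_ofReal_iff ENNReal.toReal_nonneg] at h2
    linarith
  have hne : a ≠ b := by
    rintro rfl; norm_num at hab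
  have hfin := le_anCap_of_null hWo (fun z hz => hz.1) hK.isClosed hnull hS hSW ha hb hne
  nlinarith

end
end

section
/- Let A : ℝ → ℝ be Lipschitz with graph LG, let K ⊂ ℂ be compact, fix 0 < α < 1/‖A′‖_∞, and let Ω be an open set. Then the type I boundary ∂_{I,α}^{LG}K and the type II boundary ∂_{II,α}^{LG}K are Borel subsets of ℂ. -/
/-!
Both boundaries are Borel because each ingredient is closed or a countable union of closed sets
(`F_σ`) in the vertex `l`. The graph of `A` and the frontier of `K` are closed.

Outer cones: for fixed `δ` and `ε`, the set of `l` such that `Kᶜ ∩ Γ_δ(l)` contains a disc of radius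
`ε δ` is closed, as the projection of a closed set along a compact disc of centres
(`isClosed_exists_ball_subset`). The intersection over all `δ < δl` remains closed, and `δl`, `εl`
may be restricted to reciprocals of positive integers (`measurableSet_outer`).

Inner cones: for fixed `δ`, the set of `l` with `Γ_δ(l) ⊆ Ω` is closed because the cone is open: it is
the intersection over `z ∉ Ω` of the closed sets `{l | z ∉ Γ_δ(l)}`. Again `δ` may be restricted to
reciprocals of positive integers (`measurableSet_inner`).
-/

open MeasureTheory Metric Filter Set Complex Topology Bornology
open scoped ENNReal NNReal Real

noncomputable section

/-- For fixed `r > 0` and `D` bounded, the vertices `l` for which some disc of radius `r` lies in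
`Kᶜ ∩ (l + D)` form a closed set: writing the centre as `l + q`, the condition on `(l, q)` is an
intersection of closed conditions `r ≤ dist · ·`, and `q` ranges over a compact disc. -/
lemma isClosed_exists_ball_subset (K D : Set ℂ) (R r : ℝ) (hr : 0 < r) (hD : D ⊆ ball 0 R) :
    IsClosed {l : ℂ | ∃ p : ℂ, ball p r ⊆ Kᶜ ∩ {z | z - l ∈ D}} := by
  have hS : IsClosed {x : ℂ × closedBall (0 : ℂ) R |
      (∀ z ∈ K, r ≤ dist z (x.1 + x.2)) ∧ ∀ u ∈ Dᶜ, r ≤ dist u x.2} := by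
    simp only [ofPred_and, ofPred_forall]
    refine IsClosed.inter ?_ ?_
    · exact isClosed_iInter fun z => isClosed_iInter fun _ =>
        isClosed_le continuous_const (by fun_prop)
    · exact isClosed_iInter fun z => isClosed_iInter fun _ =>
        isClosed_le continuous_const (by fun_prop)
  have : CompactSpace (closedBall (0 : ℂ) R) :=
    isCompact_iff_compactSpace.mp (isCompact_closedBall _ _)
  convert isClosedMap_fst_of_compactSpace _ hS using 1
  ext l
  simp only [mem_ofPred_eq, mem_image, Prod.exists, exists_and_right, exists_eq_right]
  constructor
  · rintro ⟨p, hp⟩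
    have hpD : p - l ∈ D := (hp (mem_ball_self hr)).2
    refine ⟨⟨p - l, ball_subset_closedBall (hD hpD)⟩, ?_, ?_⟩
    · intro z hz
      by_contra! h
      exact (hp (by simpa using h)).1 hz
    · intro u hu
      by_contra! h
      have h' : l + u ∈ ball p r := by
        rw [mem_ball, dist_eq_norm]
        rw [dist_eq_norm] at h
        rwa [show l + u - p = u - (p - l) by ring]
      exact hu (by simpa using (hp h').2)
  · rintro ⟨q, h1, h2⟩
    refine ⟨l + q, fun z hz => ⟨fun hzK => ?_, ?_⟩⟩
    · exact (h1 z hzK).not_gt hz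
    · by_contra hzD
      refine (h2 (z - l) hzD).not_gt ?_
      rw [mem_ball, dist_eq_norm] at hz
      rwa [dist_eq_norm, sub_sub]

/-- Common form of the upper and lower outer conditions, with `l + D δ` in the role of the
truncated cone. The thresholds `δl`, `εl` may be shrunk to `1 / (n + 1)`, `1 / (m + 1)`, which makes
the set a countable union of closed sets. -/
lemma measurableSet_outer (K : Set ℂ) (D : ℝ → Set ℂ) (hD : ∀ δ, D δ ⊆ ball 0 δ) :
    MeasurableSet {l : ℂ | ∃ δl εl : ℝ, 0 < δl ∧ 0 < εl ∧ ∀ δ : ℝ, 0 < δ → δ < δl →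
      ∃ p : ℂ, ball p (εl * δ) ⊆ Kᶜ ∩ {z | z - l ∈ D δ}} := by
  have key : MeasurableSet (⋃ n : ℕ, ⋃ m : ℕ, ⋂ δ : ℝ, ⋂ _ : 0 < δ, ⋂ _ : δ < 1 / ((n : ℝ) + 1),
      {l : ℂ | ∃ p : ℂ, ball p (1 / ((m : ℝ) + 1) * δ) ⊆ Kᶜ ∩ {z | z - l ∈ D δ}}) := by
    refine MeasurableSet.iUnion fun n => MeasurableSet.iUnion fun m => IsClosed.measurableSet ?_
    exact isClosed_iInter fun δ => isClosed_iInter fun hδ => isClosed_iInter fun _ =>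
      isClosed_exists_ball_subset K (D δ) δ _ (by positivity) (hD δ)
  convert key using 1
  ext l
  simp only [mem_ofPred_eq, mem_iUnion, mem_iInter]
  constructor
  · rintro ⟨δl, εl, h1, h2, h⟩
    obtain ⟨n, hn⟩ := exists_nat_one_div_lt h1
    obtain ⟨m, hm⟩ := exists_nat_one_div_lt h2
    refine ⟨n, m, fun δ hδ hδn => ?_⟩
    obtain ⟨p, hp⟩ := h δ hδ (hδn.trans hn)
    exact ⟨p, (ball_subset_ball (by gcongr)).trans hp⟩
  · rintro ⟨n, m, h⟩
    exact ⟨_, _, by positivity, by positivity, h⟩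

/-- Common form of the upper and lower inner conditions. For fixed `δ` the condition
`l + D δ ⊆ Ω` is closed in `l`, since `D δ` is open. -/
lemma measurableSet_inner (Ω : Set ℂ) (D : ℝ → Set ℂ) (hD : ∀ δ, IsOpen (D δ)) (hmono : Monotone D) :
    MeasurableSet {l : ℂ | ∃ δ : ℝ, 0 < δ ∧ {z | z - l ∈ D δ} ⊆ Ω} := by
  have key : MeasurableSet (⋃ n : ℕ, ⋂ z : ℂ, ⋂ _ : z ∉ Ω,
      {l : ℂ | z - l ∉ D (1 / ((n : ℝ) + 1))}) := by
    refine MeasurableSet.iUnion fun n => IsClosed.measurableSet ?_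
    refine isClosed_iInter fun z => isClosed_iInter fun _ => ?_
    exact (hD _).isClosed_compl.preimage (by fun_prop : Continuous fun l : ℂ => z - l)
  convert key using 1
  ext l
  simp only [mem_ofPred_eq, mem_iUnion, mem_iInter]
  constructor
  · rintro ⟨δ, hδ, h⟩
    obtain ⟨n, hn⟩ := exists_nat_one_div_lt hδ
    exact ⟨n, fun z hz hzD => hz (h (hmono hn.le hzD))⟩
  · rintro ⟨n, h⟩
    refine ⟨1 / ((n : ℝ) + 1), by positivity, fun z hz => ?_⟩
    by_contra hzΩ
    exact h z hzΩ hz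

lemma coneUpT_eq (δ : ℝ) (l : ℂ) (α : ℝ) : coneUpT δ l α = {z | z - l ∈ coneUpT δ 0 α} := by
  ext z
  simp [coneUpT, coneUp, coneAt, dist_eq_norm]

lemma coneDownT_eq (δ : ℝ) (l : ℂ) (α : ℝ) :
    coneDownT δ l α = {z | z - l ∈ coneDownT δ 0 α} := by
  ext z
  simp [coneDownT, coneDown, coneAt, dist_eq_norm]

lemma isOpen_coneAt (l : ℂ) (α : ℝ) : IsOpen (coneAt l α) :=
  isOpen_lt (by fun_prop) (by fun_prop)

lemma isOpen_coneUpT (δ : ℝ) (l : ℂ) (α : ℝ) : IsOpen (coneUpT δ l α) :=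
  isOpen_ball.inter ((isOpen_coneAt l α).inter (isOpen_lt continuous_const continuous_im))

lemma isOpen_coneDownT (δ : ℝ) (l : ℂ) (α : ℝ) : IsOpen (coneDownT δ l α) :=
  isOpen_ball.inter ((isOpen_coneAt l α).inter (isOpen_lt continuous_im continuous_const))

/-- The type I boundary `∂_{I,α}^{LG} K` and the type II boundary
`∂_{II,α}^{LG} K` are Borel sets. -/
theorem stmt8
    (A : ℝ → ℝ) (L : ℝ≥0) (hA : LipschitzWith L A)
    (K : Set ℂ) (hK : IsCompact K)
    (α : ℝ) (hα : 0 < α) (hαL : α * (L:ℝ) < 1)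
    (Ω : Set ℂ) (hΩ : IsOpen Ω) :
    MeasurableSet (typeI K A α) ∧ MeasurableSet (typeII K A Ω α) := by
  have hI : MeasurableSet (typeI K A α) := by
    have hG : IsClosed (lipGraph A) :=
      isClosed_eq continuous_im (hA.continuous.comp continuous_re)
    have hu : MeasurableSet {l | upperOuter K l α} := by
      have h := measurableSet_outer K (fun δ => coneUpT δ 0 α) fun δ => inter_subset_left
      simp only [← coneUpT_eq] at h
      exact h
    have hd : MeasurableSet {l | lowerOuter K l α} := by
      have h := measurableSet_outer K (fun δ => coneDownT δ 0 α) fun δ => inter_subset_left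
      simp only [← coneDownT_eq] at h
      exact h
    exact hG.measurableSet.inter (isClosed_frontier.measurableSet.inter (hu.union hd))
  refine ⟨hI, ?_⟩
  have hu : MeasurableSet {l | upperInner Ω l α} := by
    have h := measurableSet_inner Ω (fun δ => coneUpT δ 0 α) (fun δ => isOpen_coneUpT δ 0 α)
      fun a b hab => inter_subset_inter_left _ (ball_subset_ball hab)
    simp only [← coneUpT_eq] at h
    exact h
  have hd : MeasurableSet {l | lowerInner Ω l α} := by
    have h := measurableSet_inner Ω (fun δ => coneDownT δ 0 α) (fun δ => isOpen_coneDownT δ 0 α)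
      fun a b hab => inter_subset_inter_left _ (ball_subset_ball hab)
    simp only [← coneDownT_eq] at h
    exact h
  exact hI.inter (hu.union hd)

end
end

section
/- Let A : ℝ → ℝ be Lipschitz with graph LG and let ν be a finite positive compactly supported measure on ℂ that is singular with respect to ℋ¹ restricted to LG. Then for ℋ¹-almost every w ∈ LG the following holds: if there exist δ_w, ε_w > 0 and, for each 0 < δ < δ_w, a point λ_δ with B(λ_δ, ε_w δ) ⊂ (supp ν)^c ∩ B(w, δ), then lim_{δ→0} ∫ δ/|z − λ_δ|² dν(z) = 0. -/
/-!
A singular measure has vanishing one-dimensional density at `ℋ¹`-almost every point of the graph,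
and vanishing density at `w` makes the Poisson-type integrals tend to zero.

*Density.* Let `s` be a `ν`-null set carrying `ℋ¹|_{LG}`. Points of `s` where
`ν(B(w, r)) ≥ t r` for arbitrarily small `r` form a `ν`-null set; covering it by an open `U` with
`ν(U)` small, Vitali's covering lemma gives `ℋ¹ ≤ (10 / t) ν(U)`
(`hausdorff_le_of_frequently`), hence `ℋ¹`-measure zero (`density_zero`).

*Kernel.* For `ν`-a.e. `z` one has `z ∈ supp ν`, so `|z - λ_δ| ≥ ε δ`; as `|λ_δ - w| < δ`, this
gives `max(δ, |z - w|) ≤ (1 + 1/ε) |z - λ_δ|`. Splitting into dyadic balls about `w`, the integral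
is at most a constant times `∑ₖ 2⁻ᵏ ν(B(w, 2ᵏ δ)) / (2ᵏ δ)` (`kernel_bound`). The averages are
bounded and tend to zero for each `k`, so the series tends to zero by dominated convergence
(`dyadic_tendsto`).
-/

open MeasureTheory Metric Filter Set Complex Topology Bornology
open scoped ENNReal NNReal Real

noncomputable section

/-! ### One-dimensional density of a singular measure -/

/-- Vitali covering estimate: if every point of `E ⊆ U` is the centre of arbitrarily small closed
balls whose `ν`-mass is at least `t` times the radius, then `ℋ¹(E) ≤ (10 / t) ν(U)`. Neither
measurability of `E` nor any relation to a curve is needed. -/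
lemma hausdorff_le_of_frequently (ν : Measure ℂ) (E U : Set ℂ) (hU : IsOpen U) (hEU : E ⊆ U)
    (t : ℝ) (ht : 0 < t)
    (hE : ∀ w ∈ E, ∃ᶠ r in 𝓝[>] (0:ℝ), ENNReal.ofReal (t * r) ≤ ν (closedBall w r)) :
    Measure.hausdorffMeasure 1 E ≤ ENNReal.ofReal (10 / t) * ν U := by
  have hch : ∀ (n : ℕ) (w : ℂ), ∃ r : ℝ, w ∈ E →
      0 < r ∧ r < 1 / ((n:ℝ) + 1) ∧ closedBall w r ⊆ U ∧
        ENNReal.ofReal (t * r) ≤ ν (closedBall w r) := by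
    intro n w
    by_cases hw : w ∈ E
    · obtain ⟨R, hR, hRU⟩ := Metric.isOpen_iff.1 hU w (hEU hw)
      have hev : ∀ᶠ r in 𝓝[>] (0:ℝ), r ∈ Ioo (0:ℝ) (min R (1 / ((n:ℝ) + 1))) :=
        Ioo_mem_nhdsGT (lt_min hR (by positivity))
      obtain ⟨r, hr, hr0, hr1⟩ := ((hE w hw).and_eventually hev).exists
      exact ⟨r, fun _ => ⟨hr0, hr1.trans_le (min_le_right _ _),
        (closedBall_subset_ball (hr1.trans_le (min_le_left _ _))).trans hRU, hr⟩⟩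
    · exact ⟨0, fun h => absurd h hw⟩
  choose ρ hρ using hch
  have hV := fun n : ℕ => Vitali.exists_disjoint_subfamily_covering_enlargement_closedBall
    E (fun w : ℂ => w) (ρ n) (1 / ((n:ℝ) + 1)) (fun w hw => (hρ n w hw).2.1.le) 5 (by norm_num)
  choose u huE hud huc using hV
  have hcount : ∀ n, (u n).Countable := fun n =>
    (hud n).countable_of_nonempty_interior fun w hw =>
      ⟨w, ball_subset_interior_closedBall (mem_ball_self (hρ n w (huE n hw)).1)⟩
  have : ∀ n, Countable (u n) := fun n => (hcount n).to_subtype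
  have hdiam : ∀ n (i : u n), ediam (closedBall (i : ℂ) (5 * ρ n i))
      ≤ ENNReal.ofReal (10 * ρ n i) := by
    intro n i
    rw [← Metric.closedEBall_ofReal (by linarith [(hρ n i (huE n i.2)).1])]
    refine Metric.ediam_closedEBall_le.trans (le_of_eq ?_)
    rw [show (2 : ℝ≥0∞) = ENNReal.ofReal 2 by simp, ← ENNReal.ofReal_mul (by norm_num)]
    congr 1; ring
  have hr : Tendsto (fun n : ℕ => ENNReal.ofReal (10 * (1 / ((n:ℝ) + 1)))) atTop (𝓝 0) := by
    have := ENNReal.tendsto_ofReal (tendsto_one_div_add_atTop_nhds_zero_nat (𝕜 := ℝ) |>.const_mul 10)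
    simpa using this
  refine (Measure.hausdorffMeasure_le_liminf_tsum 1 E (l := atTop) _ hr
    (fun n (i : u n) => closedBall (i : ℂ) (5 * ρ n i)) ?_ ?_).trans ?_
  · refine Eventually.of_forall fun n i => (hdiam n i).trans (ENNReal.ofReal_le_ofReal ?_)
    linarith [(hρ n i (huE n i.2)).2.1]
  · refine Eventually.of_forall fun n w hw => ?_
    obtain ⟨b, hb, hsub⟩ := huc n w hw
    exact mem_iUnion.2 ⟨⟨b, hb⟩, hsub (mem_closedBall_self (hρ n w hw).1.le)⟩
  · refine Filter.liminf_le_of_le (by isBoundedDefault) fun b hb => ?_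
    obtain ⟨n, hn⟩ := hb.exists
    refine hn.trans ?_
    calc ∑' i : u n, ediam (closedBall (i : ℂ) (5 * ρ n i)) ^ (1:ℝ)
        ≤ ∑' i : u n, ENNReal.ofReal (10 / t) * ν (closedBall (i : ℂ) (ρ n i)) := by
          refine ENNReal.tsum_le_tsum fun i => ?_
          rw [ENNReal.rpow_one]
          refine (hdiam n i).trans ?_
          refine le_trans (le_of_eq ?_) (mul_le_mul_right (hρ n i (huE n i.2)).2.2.2 _)
          rw [← ENNReal.ofReal_mul (by positivity)]
          congr 1; field_simp
      _ = ENNReal.ofReal (10 / t) * ∑' i : u n, ν (closedBall (i : ℂ) (ρ n i)) :=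
          ENNReal.tsum_mul_left
      _ ≤ ENNReal.ofReal (10 / t) * ν U := by
          gcongr
          refine (tsum_meas_le_meas_iUnion_of_disjoint ν
            (fun i : u n => isClosed_closedBall.measurableSet) ?_).trans
              (measure_mono (iUnion_subset fun i => (hρ n i (huE n i.2)).2.2.1))
          intro i j hij
          exact hud n i.2 j.2 (fun h => hij (Subtype.ext h))

/-- A finite measure has zero one-dimensional density at `ℋ¹`-almost every point of any of its
null sets. -/
lemma density_zero (ν : Measure ℂ) [IsFiniteMeasure ν] (s : Set ℂ) (hs : ν s = 0) :
    Measure.hausdorffMeasure 1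
      {w ∈ s | ¬ Tendsto (fun r : ℝ => ν.real (closedBall w r) / r) (𝓝[>] 0) (𝓝 0)} = 0 := by
  let E : ℕ → Set ℂ := fun n => {w ∈ s | ∃ᶠ r in 𝓝[>] (0:ℝ),
    ENNReal.ofReal (1 / ((n:ℝ) + 1) * r) ≤ ν (closedBall w r)}
  have hE0 : ∀ n, Measure.hausdorffMeasure 1 (E n) = 0 := by
    intro n
    have hνE : ν (E n) = 0 := measure_mono_null (fun w hw => hw.1) hs
    have hpos : 0 < 1 / ((n:ℝ) + 1) := by positivity
    set c := ENNReal.ofReal (10 / (1 / ((n:ℝ) + 1))) with hc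
    have hc0 : c ≠ 0 := by
      rw [hc]; exact (ENNReal.ofReal_pos.2 (by positivity)).ne'
    refine le_antisymm (le_of_forall_gt fun e he => ?_) zero_le
    have he' : ν (E n) < e / c := by
      rw [hνE]; exact ENNReal.div_pos he.ne' ENNReal.ofReal_ne_top
    obtain ⟨U, hEU, hU, hUe⟩ := (E n).exists_isOpen_lt_of_lt _ he'
    refine (hausdorff_le_of_frequently ν (E n) U hU hEU _ hpos (fun w hw => hw.2)).trans_lt ?_
    rw [mul_comm]
    exact (ENNReal.lt_div_iff_mul_lt (Or.inl hc0) (Or.inl ENNReal.ofReal_ne_top)).1 hUe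
  refine measure_mono_null ?_ (measure_iUnion_null hE0)
  rintro w ⟨hws, hw⟩
  by_contra hcon
  apply hw
  have hnot : ∀ n : ℕ, ∀ᶠ r in 𝓝[>] (0:ℝ),
      ν (closedBall w r) < ENNReal.ofReal (1 / ((n:ℝ) + 1) * r) := by
    intro n
    by_contra h
    refine hcon (mem_iUnion.2 ⟨n, hws, ?_⟩)
    rw [not_eventually] at h
    exact h.mono fun r hr => not_lt.1 hr
  rw [Metric.tendsto_nhds]
  intro e he
  obtain ⟨n, hn⟩ := exists_nat_one_div_lt he
  filter_upwards [hnot n, self_mem_nhdsWithin] with r hr hr0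
  have hr0 : 0 < r := hr0
  have h1 : ν.real (closedBall w r) ≤ 1 / ((n:ℝ) + 1) * r :=
    ENNReal.toReal_le_of_le_ofReal (by positivity) hr.le
  rw [Real.dist_eq, sub_zero, abs_of_nonneg (by positivity)]
  exact ((div_le_iff₀ hr0).2 h1).trans_lt hn

lemma measure_compl_suppM (ν : Measure ℂ) : ν (suppM ν)ᶜ = 0 := by
  have h : suppM ν = ν.support := by
    ext z
    rw [Measure.mem_support_iff_forall]
    constructor
    · intro h U hU
      obtain ⟨r, hr, hrU⟩ := Metric.mem_nhds_iff.1 hU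
      exact (h r hr).trans_le (measure_mono hrU)
    · exact fun h r hr => h _ (ball_mem_nhds z hr)
  rw [h]; exact Measure.measure_compl_support

/-! ### The Poisson-type kernel -/

/-- The least `k` with `d ≤ 2ᵏ δ` works. Consequently `1 / max(δ, d)²` is dominated by the sum over
`k` of `4 / (2ᵏ δ)²` times the indicator of `d ≤ 2ᵏ δ`. -/
lemma exists_dyadic (δ d : ℝ) (hδ : 0 < δ) :
    ∃ k : ℕ, d ≤ 2 ^ k * δ ∧ 2 ^ k * δ ≤ 2 * max δ d := by
  have hex : ∃ k : ℕ, d ≤ 2 ^ k * δ := by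
    obtain ⟨k, hk⟩ := pow_unbounded_of_one_lt (d / δ) (one_lt_two)
    exact ⟨k, ((div_lt_iff₀ hδ).1 hk).le⟩
  classical
  refine ⟨Nat.find hex, Nat.find_spec hex, ?_⟩
  rcases h : Nat.find hex with _ | m
  · have := le_max_left δ d
    simp; linarith
  · have h1 := Nat.find_min hex (m := m) (by omega)
    have := le_max_right δ d
    rw [pow_succ]; linarith

/-- If `max(δ, |z - w|) ≤ C |z - l|` for almost every `z`, the integral of the
kernel is controlled by the dyadic averages of `ν` around `w`. -/
lemma kernel_bound (ν : Measure ℂ) [IsFiniteMeasure ν] (w l : ℂ) (δ C : ℝ)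
    (hδ : 0 < δ)
    (h : ∀ᵐ z ∂ν, max δ (dist z w) ≤ C * ‖z - l‖)
    (hsum : Summable fun k : ℕ =>
      4 * C ^ 2 * ((1 / 2) ^ k * (ν.real (closedBall w (2 ^ k * δ)) / (2 ^ k * δ)))) :
    ∫ z, δ / ‖z - l‖ ^ 2 ∂ν ≤
      ∑' k : ℕ, 4 * C ^ 2 * ((1 / 2) ^ k * (ν.real (closedBall w (2 ^ k * δ)) / (2 ^ k * δ))) := by
  have hnn : ∀ k : ℕ, 0 ≤
      4 * C ^ 2 * ((1 / 2) ^ k * (ν.real (closedBall w (2 ^ k * δ)) / (2 ^ k * δ))) := by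
    intro k; positivity
  rw [integral_eq_lintegral_of_nonneg_ae (Eventually.of_forall fun z => by positivity)
    (by fun_prop : Measurable fun z : ℂ => δ / ‖z - l‖ ^ 2).aestronglyMeasurable]
  refine ENNReal.toReal_le_of_le_ofReal (tsum_nonneg hnn) ?_
  rw [ENNReal.ofReal_tsum_of_nonneg hnn hsum]
  let a : ℕ → ℝ := fun k => 4 * C ^ 2 * δ / (2 ^ k * δ) ^ 2
  have ha : ∀ k, 0 ≤ a k := fun k => by positivity
  calc ∫⁻ z, ENNReal.ofReal (δ / ‖z - l‖ ^ 2) ∂ν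
      ≤ ∫⁻ z, ∑' k : ℕ, (closedBall w (2 ^ k * δ)).indicator
          (fun _ => ENNReal.ofReal (a k)) z ∂ν := by
        refine lintegral_mono_ae (h.mono fun z hz => ?_)
        obtain ⟨k, hk1, hk2⟩ := exists_dyadic δ (dist z w) hδ
        refine le_trans ?_ (ENNReal.le_tsum k)
        rw [indicator_of_mem (mem_closedBall.2 hk1)]
        refine ENNReal.ofReal_le_ofReal ?_
        have hm : 0 < C * ‖z - l‖ := hδ.trans_le ((le_max_left _ _).trans hz)
        have hz0 : ‖z - l‖ ≠ 0 := fun h0 => by simp [h0] at hm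
        have hsq : (2 ^ k * δ) ^ 2 ≤ (2 * (C * ‖z - l‖)) ^ 2 :=
          pow_le_pow_left₀ (by positivity) (hk2.trans (by linarith)) 2
        rw [div_le_div_iff₀ (by positivity) (by positivity)]
        nlinarith
    _ = ∑' k : ℕ, ENNReal.ofReal (a k) * ν (closedBall w (2 ^ k * δ)) := by
        rw [lintegral_tsum fun k => (measurable_const.indicator
          isClosed_closedBall.measurableSet).aemeasurable]
        exact tsum_congr fun k => lintegral_indicator_const isClosed_closedBall.measurableSet _
    _ = _ := by
        refine tsum_congr fun k => ?_
        rw [← ofReal_measureReal, ← ENNReal.ofReal_mul (ha k)]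
        congr 1
        simp only [a, one_div, inv_pow]
        field_simp

/-- Zero density at `w` forces the dyadic averages around `w` to vanish with the scale, by
dominated convergence for series. -/
lemma dyadic_tendsto (ν : Measure ℂ) [IsFiniteMeasure ν] (w : ℂ) (C : ℝ)
    (h : Tendsto (fun r : ℝ => ν.real (closedBall w r) / r) (𝓝[>] 0) (𝓝 0)) :
    (∀ δ : ℝ, 0 < δ → Summable fun k : ℕ =>
      4 * C ^ 2 * ((1 / 2) ^ k * (ν.real (closedBall w (2 ^ k * δ)) / (2 ^ k * δ)))) ∧
    Tendsto (fun δ : ℝ => ∑' k : ℕ,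
      4 * C ^ 2 * ((1 / 2) ^ k * (ν.real (closedBall w (2 ^ k * δ)) / (2 ^ k * δ))))
      (𝓝[>] 0) (𝓝 0) := by
  -- The averages are at most `1` at small radii and at most `ν(ℂ) / R` at radii `≥ R`.
  obtain ⟨B, hB⟩ : ∃ B : ℝ, ∀ r : ℝ, 0 < r → ν.real (closedBall w r) / r ≤ B := by
    have h1 := h.eventually (ge_mem_nhds (zero_lt_one))
    obtain ⟨R, hR, hR1⟩ := (mem_nhdsGT_iff_exists_Ioo_subset).1 h1
    have hR : 0 < R := hR
    refine ⟨max 1 (ν.real univ / R), fun r hr => ?_⟩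
    rcases lt_or_ge r R with hrR | hrR
    · exact (hR1 ⟨hr, hrR⟩ : _ ≤ _).trans (le_max_left _ _)
    · refine le_trans ?_ (le_max_right _ _)
      exact div_le_div₀ (by positivity) (measureReal_mono (subset_univ _)) hR hrR
  have hbd : ∀ δ : ℝ, 0 < δ → ∀ k : ℕ,
      ‖4 * C ^ 2 * ((1 / 2) ^ k * (ν.real (closedBall w (2 ^ k * δ)) / (2 ^ k * δ)))‖ ≤
        4 * C ^ 2 * ((1 / 2) ^ k * B) := by
    intro δ hδ k
    rw [Real.norm_of_nonneg (by positivity)]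
    gcongr
    exact hB _ (by positivity)
  have hsb : Summable fun k : ℕ => 4 * C ^ 2 * ((1 / 2 : ℝ) ^ k * B) :=
    (summable_geometric_two.mul_right B).mul_left _
  refine ⟨fun δ hδ => hsb.of_norm_bounded (hbd δ hδ), ?_⟩
  have key := tendsto_tsum_of_dominated_convergence (𝓕 := 𝓝[>] (0:ℝ))
    (f := fun (δ : ℝ) (k : ℕ) =>
      4 * C ^ 2 * ((1 / 2) ^ k * (ν.real (closedBall w (2 ^ k * δ)) / (2 ^ k * δ))))
    (g := fun _ => 0) hsb ?_ ?_
  · simpa using key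
  · intro k
    have hk : Tendsto (fun δ : ℝ => 2 ^ k * δ) (𝓝[>] 0) (𝓝[>] 0) := by
      refine tendsto_nhdsWithin_iff.2 ⟨?_, ?_⟩
      · have : Tendsto (fun δ : ℝ => 2 ^ k * δ) (𝓝 0) (𝓝 (2 ^ k * 0)) :=
          tendsto_id.const_mul _
        rw [mul_zero] at this
        exact this.mono_left nhdsWithin_le_nhds
      · filter_upwards [self_mem_nhdsWithin] with δ hδ
        have hδ : 0 < δ := hδ
        exact mem_Ioi.2 (by positivity)
    simpa using ((h.comp hk).const_mul ((1 / 2 : ℝ) ^ k)).const_mul (4 * C ^ 2)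
  · filter_upwards [self_mem_nhdsWithin] with δ hδ using hbd δ hδ

/-- Corollary 2 (CorollaryKTGen): for a finite positive compactly supported
measure `ν` singular with respect to `ℋ¹|_{LG}`, at `ℋ¹`-a.e. point `w` of the
graph: whenever balls `B(λ_δ, ε_w δ) ⊆ (supp ν)ᶜ ∩ B(w,δ)` are available,
`∫ δ/|z-λ_δ|² dν(z) → 0` as `δ → 0`. -/
theorem stmt11
    (A : ℝ → ℝ) (L : ℝ≥0) (hA : LipschitzWith L A)
    (ν : Measure ℂ) [IsFiniteMeasure ν]
    (hc : ∃ K : Set ℂ, IsCompact K ∧ ν Kᶜ = 0)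
    (hsing : ν.MutuallySingular (H1m.restrict (lipGraph A))) :
    ∀ᵐ w ∂(H1m.restrict (lipGraph A)),
      ∀ (δw εw : ℝ), 0 < δw → 0 < εw →
      ∀ lδ : ℝ → ℂ,
        (∀ δ : ℝ, 0 < δ → δ < δw → ball (lδ δ) (εw * δ) ⊆ (suppM ν)ᶜ ∩ ball w δ) →
        Tendsto (fun δ : ℝ => ∫ z, δ / ‖z - lδ δ‖^2 ∂ν) (𝓝[>] (0:ℝ)) (𝓝 0) := by
  obtain ⟨s, -, hνs, hκs⟩ := hsing
  have hs : ∀ᵐ w ∂(H1m.restrict (lipGraph A)), w ∈ s := by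
    rw [ae_iff]; exact hκs
  have hd : ∀ᵐ w ∂(H1m.restrict (lipGraph A)),
      w ∉ {w ∈ s | ¬ Tendsto (fun r : ℝ => ν.real (closedBall w r) / r) (𝓝[>] 0) (𝓝 0)} :=
    ae_restrict_of_ae (measure_eq_zero_iff_ae_notMem.1 (density_zero ν s hνs))
  filter_upwards [hs, hd] with w hws hw δw εw hδw hεw lδ hl
  have hdens : Tendsto (fun r : ℝ => ν.real (closedBall w r) / r) (𝓝[>] 0) (𝓝 0) := by
    by_contra hcon
    exact hw ⟨hws, hcon⟩
  obtain ⟨hsum, hlim⟩ := dyadic_tendsto ν w (1 + 1 / εw) hdens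
  refine tendsto_of_tendsto_of_tendsto_of_le_of_le' tendsto_const_nhds hlim ?_ ?_
  · filter_upwards [self_mem_nhdsWithin] with δ hδ
    have hδ : 0 < δ := hδ
    exact integral_nonneg fun z => by positivity
  · filter_upwards [Ioo_mem_nhdsGT hδw] with δ hδ
    refine kernel_bound ν w (lδ δ) δ (1 + 1 / εw) hδ.1 ?_ (hsum δ hδ.1)
    have hsub := hl δ hδ.1 hδ.2
    have hsupp : ∀ᵐ z ∂ν, z ∈ suppM ν := by
      rw [ae_iff]; exact measure_compl_suppM ν
    filter_upwards [hsupp] with z hz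
    -- `z` lies outside the ball about `lδ δ`, and the centre `lδ δ` lies in `ball w δ`.
    have h1 : εw * δ ≤ ‖z - lδ δ‖ := by
      by_contra hlt
      exact (hsub (mem_ball_iff_norm.2 (not_le.1 hlt))).1 hz
    have h2 : dist (lδ δ) w < δ := (hsub (mem_ball_self (mul_pos hεw hδ.1))).2
    have h3 : δ ≤ 1 / εw * ‖z - lδ δ‖ := by
      rw [one_div, ← div_eq_inv_mul, le_div_iff₀ hεw]; linarith
    have h4 : dist z w ≤ ‖z - lδ δ‖ + dist (lδ δ) w := by
      rw [← dist_eq_norm]; exact dist_triangle _ _ _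
    rw [add_mul, one_mul]
    exact max_le (by linarith [norm_nonneg (z - lδ δ)]) (by linarith)


end
end
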